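/- Fix real constants α, β, γ and let (u,v) be a regular solution of the Schrödinger–Korteweg–de Vries system. Then the energy I₂(t) = ∫_ℝ ( αγ·v(t,x)·|u(t,x)|² − (α/6)·v(t,x)³ + (βγ/2)·|u(t,x)|⁴ + (α/2)·(∂ₓv(t,x))² + γ·|∂ₓu(t,x)|² ) dx is independent of t: I₂(t) = I₂(0) for all t ∈ ℝ. -/

import Mathlib

open MeasureTheory Filter

/-- A regular solution of the Schrödinger–Korteweg–de Vries system
    `i ∂ₜu + ∂ₓ²u = α u v + β u |u|²`,
    `∂ₜv + ∂ₓ³v + v ∂ₓv = γ ∂ₓ(|u|²)`: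
    `u, v` are smooth in `(t,x)`, Schwartz in `x` for each fixed `t`, satisfy the
    equations pointwise, and have uniformly-in-time bounded `H¹ₓ` norms. -/
def IsSKdVSolution (α β γ : ℝ) (u : ℝ → ℝ → ℂ) (v : ℝ → ℝ → ℝ) : Prop :=
  ContDiff ℝ (⊤ : ℕ∞) (fun p : ℝ × ℝ => u p.1 p.2) ∧
  ContDiff ℝ (⊤ : ℕ∞) (fun p : ℝ × ℝ => v p.1 p.2) ∧
  (∀ t : ℝ, ∃ f : SchwartzMap ℝ ℂ, ∀ x, f x = u t x) ∧
  (∀ t : ℝ, ∃ g : SchwartzMap ℝ ℝ, ∀ x, g x = v t x) ∧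
  (∀ t x : ℝ,
    Complex.I * deriv (fun s => u s x) t + iteratedDeriv 2 (u t) x
      = (α : ℂ) * u t x * (v t x : ℂ) + (β : ℂ) * u t x * (‖u t x‖ : ℂ) ^ 2) ∧
  (∀ t x : ℝ,
    deriv (fun s => v s x) t + iteratedDeriv 3 (v t) x + v t x * deriv (v t) x
      = γ * deriv (fun y => ‖u t y‖ ^ 2) x) ∧
  (∃ C : ℝ, ∀ t : ℝ,
    (∫ x : ℝ, ‖u t x‖ ^ 2) + (∫ x : ℝ, ‖deriv (u t) x‖ ^ 2) +
      (∫ x : ℝ, (v t x) ^ 2) + (∫ x : ℝ, (deriv (v t) x) ^ 2) ≤ C)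

section
section
open MeasureTheory Filter Topology
open scoped ContDiff

namespace SK

/-! smooth space-time functions -/
def Sm (f : ℝ → ℝ → ℝ) : Prop := ContDiff ℝ ∞ (fun p : ℝ × ℝ => f p.1 p.2)
noncomputable def dx (f : ℝ → ℝ → ℝ) : ℝ → ℝ → ℝ := fun t x => deriv (f t) x
noncomputable def dt (f : ℝ → ℝ → ℝ) : ℝ → ℝ → ℝ := fun t x => deriv (fun s => f s x) t

lemma Sm.hx_aux {f : ℝ → ℝ → ℝ} (h : Sm f) (t x : ℝ) :
    HasDerivAt (f t) (fderiv ℝ (fun p : ℝ × ℝ => f p.1 p.2) (t, x) (0, 1)) x := by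
  have h1 : HasFDerivAt (fun p : ℝ × ℝ => f p.1 p.2) _ (t, x) :=
    (h.differentiable (by simp) (t, x)).hasFDerivAt
  have h2 : HasDerivAt (fun y : ℝ => (t, y)) ((0 : ℝ), (1 : ℝ)) x :=
    (hasDerivAt_const x t).prodMk (hasDerivAt_id x)
  exact h1.comp_hasDerivAt x h2

lemma Sm.ht_aux {f : ℝ → ℝ → ℝ} (h : Sm f) (t x : ℝ) :
    HasDerivAt (fun s => f s x) (fderiv ℝ (fun p : ℝ × ℝ => f p.1 p.2) (t, x) (1, 0)) t := by
  have h1 : HasFDerivAt (fun p : ℝ × ℝ => f p.1 p.2) _ (t, x) :=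
    (h.differentiable (by simp) (t, x)).hasFDerivAt
  have h2 : HasDerivAt (fun y : ℝ => (y, x)) ((1 : ℝ), (0 : ℝ)) t :=
    (hasDerivAt_id t).prodMk (hasDerivAt_const t x)
  exact h1.comp_hasDerivAt t h2

lemma Sm.dx_eq {f : ℝ → ℝ → ℝ} (h : Sm f) :
    dx f = fun t x => fderiv ℝ (fun p : ℝ × ℝ => f p.1 p.2) (t, x) (0, 1) := by
  funext t x; exact (h.hx_aux t x).deriv
lemma Sm.dt_eq {f : ℝ → ℝ → ℝ} (h : Sm f) :
    dt f = fun t x => fderiv ℝ (fun p : ℝ × ℝ => f p.1 p.2) (t, x) (1, 0) := by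
  funext t x; exact (h.ht_aux t x).deriv

lemma Sm.hx {f : ℝ → ℝ → ℝ} (h : Sm f) (t x : ℝ) : HasDerivAt (f t) (dx f t x) x :=
  (h.hx_aux t x).differentiableAt.hasDerivAt
lemma Sm.ht {f : ℝ → ℝ → ℝ} (h : Sm f) (t x : ℝ) : HasDerivAt (fun s => f s x) (dt f t x) t :=
  (h.ht_aux t x).differentiableAt.hasDerivAt

lemma Sm.fd {f : ℝ → ℝ → ℝ} (h : Sm f) :
    ContDiff ℝ ∞ (fderiv ℝ (fun p : ℝ × ℝ => f p.1 p.2)) :=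
  ContDiff.fderiv_right (m := ∞) h (by simp)

lemma Sm.dx {f : ℝ → ℝ → ℝ} (h : Sm f) : Sm (dx f) := by
  rw [h.dx_eq]
  exact h.fd.clm_apply contDiff_const
lemma Sm.dt {f : ℝ → ℝ → ℝ} (h : Sm f) : Sm (dt f) := by
  rw [h.dt_eq]
  exact h.fd.clm_apply contDiff_const

lemma Sm.comm {f : ℝ → ℝ → ℝ} (h : Sm f) : SK.dt (SK.dx f) = SK.dx (SK.dt f) := by
  funext t x
  have hs : IsSymmSndFDerivAt ℝ (fun p : ℝ × ℝ => f p.1 p.2) (t, x) :=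
    (ContDiff.contDiffAt h).isSymmSndFDerivAt (by
      simp only [minSmoothness_of_isRCLikeNormedField]; exact WithTop.coe_le_coe.2 (le_top : (2 : ℕ∞) ≤ ⊤))
  have hd : DifferentiableAt ℝ (fderiv ℝ (fun p : ℝ × ℝ => f p.1 p.2)) (t, x) :=
    h.fd.differentiable (by simp) _
  have e1 : SK.dt (SK.dx f) t x =
      fderiv ℝ (fderiv ℝ (fun p : ℝ × ℝ => f p.1 p.2)) (t, x) (1, 0) (0, 1) := by
    rw [h.dx.dt_eq, h.dx_eq]
    simp only [Prod.mk.eta]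
    rw [fderiv_clm_apply hd (differentiableAt_const _)]
    simp
  have e2 : SK.dx (SK.dt f) t x =
      fderiv ℝ (fderiv ℝ (fun p : ℝ × ℝ => f p.1 p.2)) (t, x) (0, 1) (1, 0) := by
    rw [h.dt.dx_eq, h.dt_eq]
    simp only [Prod.mk.eta]
    rw [fderiv_clm_apply hd (differentiableAt_const _)]
    simp
  rw [e1, e2]; exact hs _ _

lemma Sm.cont {f : ℝ → ℝ → ℝ} (h : Sm f) : Continuous (fun p : ℝ × ℝ => f p.1 p.2) :=
  ContDiff.continuous h
lemma Sm.add {f g : ℝ → ℝ → ℝ} (hf : Sm f) (hg : Sm g) : Sm (fun t x => f t x + g t x) :=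
  ContDiff.add hf hg
lemma Sm.sub {f g : ℝ → ℝ → ℝ} (hf : Sm f) (hg : Sm g) : Sm (fun t x => f t x - g t x) :=
  ContDiff.sub hf hg
lemma Sm.mul {f g : ℝ → ℝ → ℝ} (hf : Sm f) (hg : Sm g) : Sm (fun t x => f t x * g t x) :=
  ContDiff.mul hf hg
lemma Sm.const (c : ℝ) : Sm (fun _ _ => c) := contDiff_const
lemma Sm.slice {f : ℝ → ℝ → ℝ} (h : Sm f) (t : ℝ) : ContDiff ℝ ∞ (f t) :=
  ContDiff.comp (g := fun p : ℝ × ℝ => f p.1 p.2) h (contDiff_const.prodMk contDiff_id)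

/-! compactly supported in x -/
def CS (f : ℝ → ℝ → ℝ) : Prop := Sm f ∧ ∃ R : ℝ, ∀ t x, R < |x| → f t x = 0

lemma CS.dx {f : ℝ → ℝ → ℝ} (h : CS f) : CS (dx f) := by
  obtain ⟨h1, R, hR⟩ := h
  refine ⟨h1.dx, R, fun t x hx => ?_⟩
  have : f t =ᶠ[𝓝 x] fun _ => 0 := by
    filter_upwards [(isOpen_lt continuous_const continuous_abs).mem_nhds hx] with y hy
    exact hR t y hy
  simp [SK.dx, this.deriv_eq]
lemma CS.dt {f : ℝ → ℝ → ℝ} (h : CS f) : CS (dt f) := by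
  obtain ⟨h1, R, hR⟩ := h
  refine ⟨h1.dt, R, fun t x hx => ?_⟩
  have : (fun s => f s x) = fun _ => 0 := by funext s; exact hR s x hx
  simp [SK.dt, this]
lemma CS.add {f g : ℝ → ℝ → ℝ} (hf : CS f) (hg : CS g) : CS (fun t x => f t x + g t x) := by
  obtain ⟨h1, R, hR⟩ := hf
  obtain ⟨h2, S, hS⟩ := hg
  refine ⟨h1.add h2, max R S, fun t x hx => ?_⟩
  simp [hR t x (lt_of_le_of_lt (le_max_left _ _) hx), hS t x (lt_of_le_of_lt (le_max_right _ _) hx)]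
lemma CS.mul {f g : ℝ → ℝ → ℝ} (hf : CS f) (hg : Sm g) : CS (fun t x => f t x * g t x) := by
  obtain ⟨h1, R, hR⟩ := hf
  exact ⟨h1.mul hg, R, fun t x hx => by simp [hR t x hx]⟩
lemma CS.mul' {f g : ℝ → ℝ → ℝ} (hg : Sm g) (hf : CS f) : CS (fun t x => g t x * f t x) := by
  obtain ⟨h1, R, hR⟩ := hf
  exact ⟨hg.mul h1, R, fun t x hx => by simp [hR t x hx]⟩
lemma CS.cmul {f : ℝ → ℝ → ℝ} (c : ℝ) (hf : CS f) : CS (fun t x => c * f t x) :=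
  CS.mul' (Sm.const c) hf
lemma CS.neg {f : ℝ → ℝ → ℝ} (hf : CS f) : CS (fun t x => - f t x) := by
  simpa using hf.cmul (-1)
lemma CS.sub {f g : ℝ → ℝ → ℝ} (hf : CS f) (hg : CS g) : CS (fun t x => f t x - g t x) := by
  simpa [sub_eq_add_neg] using hf.add hg.neg

/-! decaying functions -/
noncomputable def wt (x : ℝ) : ℝ := (1 + x ^ 2)⁻¹
lemma wt_pos (x : ℝ) : 0 < wt x := by unfold wt; positivity
lemma wt_le (x : ℝ) : wt x ≤ 1 := by
  unfold wt; exact inv_le_one_of_one_le₀ (by nlinarith [sq_nonneg x])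
lemma wt_int : Integrable wt := integrable_inv_one_add_sq

def D (g : ℝ → ℝ) : Prop := Continuous g ∧ ∃ C, ∀ x, |g x| ≤ C * wt x

lemma bd_nonneg {g : ℝ → ℝ} {C : ℝ} (h : ∀ x, |g x| ≤ C * wt x) : 0 ≤ C := by
  have := (abs_nonneg _).trans (h 0)
  exact nonneg_of_mul_nonneg_left this (wt_pos 0)

lemma D.int {g : ℝ → ℝ} (h : D g) : Integrable g := by
  obtain ⟨hc, C, hC⟩ := h
  refine (wt_int.const_mul C).mono' hc.aestronglyMeasurable (Eventually.of_forall hC)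
lemma D.add {f g : ℝ → ℝ} (hf : D f) (hg : D g) : D (fun x => f x + g x) := by
  obtain ⟨h1, A, hA⟩ := hf
  obtain ⟨h2, B, hB⟩ := hg
  refine ⟨h1.add h2, A + B, fun x => ?_⟩
  calc _ ≤ |f x| + |g x| := abs_add_le _ _
    _ ≤ _ := by linarith [hA x, hB x]
lemma mul_bd {a b A B w : ℝ} (hw : 0 ≤ w) (hw1 : w ≤ 1) (ha : |a| ≤ A * w) (hb : |b| ≤ B * w) :
    |a * b| ≤ A * B * w := by
  rw [abs_mul]
  have h1 : 0 ≤ A * w := (abs_nonneg _).trans ha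
  have h2 : 0 ≤ B * w := (abs_nonneg _).trans hb
  calc _ ≤ (A * w) * (B * w) := mul_le_mul ha hb (abs_nonneg _) h1
    _ ≤ _ := by
      rcases hw.eq_or_lt with h | h
      · rw [← h]; simp
      · have hA : 0 ≤ A := nonneg_of_mul_nonneg_left h1 h
        have hB : 0 ≤ B := nonneg_of_mul_nonneg_left h2 h
        have : 0 ≤ A * B * w := by positivity
        nlinarith
lemma D.mul {f g : ℝ → ℝ} (hf : D f) (hg : D g) : D (fun x => f x * g x) := by
  obtain ⟨h1, A, hA⟩ := hf
  obtain ⟨h2, B, hB⟩ := hg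
  exact ⟨h1.mul h2, A * B, fun x => mul_bd (wt_pos x).le (wt_le x) (hA x) (hB x)⟩
lemma D.cmul {f : ℝ → ℝ} (c : ℝ) (hf : D f) : D (fun x => c * f x) := by
  obtain ⟨h1, A, hA⟩ := hf
  refine ⟨h1.const_mul c, |c| * A, fun x => ?_⟩
  rw [abs_mul, mul_assoc]
  exact mul_le_mul_of_nonneg_left (hA x) (abs_nonneg _)
lemma D.neg {f : ℝ → ℝ} (hf : D f) : D (fun x => - f x) := by simpa using hf.cmul (-1)
lemma D.sub {f g : ℝ → ℝ} (hf : D f) (hg : D g) : D (fun x => f x - g x) := by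
  simpa [sub_eq_add_neg] using hf.add hg.neg
lemma D.pow {f : ℝ → ℝ} (hf : D f) (n : ℕ) : D (fun x => f x ^ (n + 1)) := by
  induction n with
  | zero => simpa using hf
  | succ n ih => simpa [pow_succ] using ih.mul hf
lemma D.sq {f : ℝ → ℝ} (hf : D f) : D (fun x => f x ^ 2) := hf.pow 1

def Dec (f : ℝ → ℝ → ℝ) : Prop := Continuous (fun p : ℝ × ℝ => f p.1 p.2) ∧
  ∀ A : ℝ, ∃ C, ∀ t, |t| ≤ A → ∀ x, |f t x| ≤ C * wt x

lemma Dec.D {f : ℝ → ℝ → ℝ} (h : Dec f) (t : ℝ) : D (f t) := by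
  obtain ⟨h1, h2⟩ := h
  obtain ⟨C, hC⟩ := h2 |t|
  exact ⟨h1.comp (Continuous.prodMk continuous_const continuous_id), C, hC t le_rfl⟩
lemma Dec.add {f g : ℝ → ℝ → ℝ} (hf : Dec f) (hg : Dec g) : Dec (fun t x => f t x + g t x) := by
  refine ⟨hf.1.add hg.1, fun A => ?_⟩
  obtain ⟨B, hB⟩ := hf.2 A
  obtain ⟨C, hC⟩ := hg.2 A
  refine ⟨B + C, fun t ht x => ?_⟩
  calc _ ≤ |f t x| + |g t x| := abs_add_le _ _
    _ ≤ _ := by linarith [hB t ht x, hC t ht x]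
lemma Dec.mul {f g : ℝ → ℝ → ℝ} (hf : Dec f) (hg : Dec g) : Dec (fun t x => f t x * g t x) := by
  refine ⟨hf.1.mul hg.1, fun A => ?_⟩
  obtain ⟨B, hB⟩ := hf.2 A
  obtain ⟨C, hC⟩ := hg.2 A
  exact ⟨B * C, fun t ht x => mul_bd (wt_pos x).le (wt_le x) (hB t ht x) (hC t ht x)⟩
lemma Dec.cmul {f : ℝ → ℝ → ℝ} (c : ℝ) (hf : Dec f) : Dec (fun t x => c * f t x) := by
  refine ⟨hf.1.const_mul c, fun A => ?_⟩
  obtain ⟨B, hB⟩ := hf.2 A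
  refine ⟨|c| * B, fun t ht x => ?_⟩
  rw [abs_mul, mul_assoc]
  exact mul_le_mul_of_nonneg_left (hB t ht x) (abs_nonneg _)
lemma Dec.neg {f : ℝ → ℝ → ℝ} (hf : Dec f) : Dec (fun t x => - f t x) := by
  simpa using hf.cmul (-1)
lemma Dec.sub {f g : ℝ → ℝ → ℝ} (hf : Dec f) (hg : Dec g) : Dec (fun t x => f t x - g t x) := by
  simpa [sub_eq_add_neg] using hf.add hg.neg
lemma Dec.sq {f : ℝ → ℝ → ℝ} (hf : Dec f) : Dec (fun t x => f t x ^ 2) := by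
  simpa [pow_two] using hf.mul hf
lemma Dec.cube {f : ℝ → ℝ → ℝ} (hf : Dec f) : Dec (fun t x => f t x ^ 3) := by
  simpa [pow_succ] using (hf.mul hf).mul hf

lemma CS.dec {f : ℝ → ℝ → ℝ} (h : CS f) : Dec f := by
  obtain ⟨h1, R, hR⟩ := h
  refine ⟨h1.cont, fun A => ?_⟩
  have hK : IsCompact (Set.Icc (-A) A ×ˢ Set.Icc (-R) R) := isCompact_Icc.prod isCompact_Icc
  obtain ⟨C, hC⟩ := hK.exists_bound_of_continuousOn h1.cont.continuousOn
  refine ⟨max C 0 * (1 + R ^ 2), fun t ht x => ?_⟩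
  by_cases hx : R < |x|
  · rw [hR t x hx, abs_zero]
    have := (wt_pos x).le
    positivity
  · push Not at hx
    have h2 := hC (t, x) ⟨abs_le.1 ht, abs_le.1 hx⟩
    simp only [Real.norm_eq_abs] at h2
    have h3 : 1 ≤ (1 + R ^ 2) * wt x := by
      unfold wt
      rw [← div_eq_mul_inv, one_le_div (by positivity)]
      have := abs_nonneg x
      nlinarith [sq_abs x]
    have h4 : |f t x| ≤ max C 0 := h2.trans (le_max_left _ _)
    have h5 : 0 ≤ max C 0 := le_max_right _ _
    rw [mul_assoc]; nlinarith

/-! balance law -/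
lemma abs_le_of_ball {t t0 : ℝ} (h : t ∈ Metric.ball t0 1) : |t| ≤ |t0| + 1 := by
  rw [Metric.mem_ball, Real.dist_eq] at h
  have := abs_sub_abs_le_abs_sub t t0
  linarith

lemma Dec.cont_int {s : ℝ → ℝ → ℝ} (h : Dec s) : Continuous (fun t => ∫ x, s t x) := by
  rw [continuous_iff_continuousAt]
  intro t0
  obtain ⟨C, hC⟩ := h.2 (|t0| + 1)
  refine continuousAt_of_dominated (bound := fun x => C * wt x) ?_ ?_ (wt_int.const_mul C) ?_
  · exact Eventually.of_forall fun t => (h.D t).1.aestronglyMeasurable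
  · filter_upwards [Metric.ball_mem_nhds t0 one_pos] with t ht
    exact Eventually.of_forall fun x => hC t (abs_le_of_ball ht) x
  · exact Eventually.of_forall fun x =>
      (h.1.comp (Continuous.prodMk continuous_id continuous_const)).continuousAt

lemma balance {e et F s : ℝ → ℝ → ℝ} (he : Dec e) (het : Dec et) (hF : Dec F) (hs : Dec s)
    (h1 : ∀ t x, HasDerivAt (fun t => e t x) (et t x) t)
    (h2 : ∀ t x, HasDerivAt (F t) (et t x - s t x) x) (a b : ℝ) :
    (∫ x, e b x) - (∫ x, e a x) = ∫ t in a..b, ∫ x, s t x := by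
  have key : ∀ t0, HasDerivAt (fun t => ∫ x, e t x) (∫ x, s t0 x) t0 := by
    intro t0
    obtain ⟨C, hC⟩ := het.2 (|t0| + 1)
    have := (hasDerivAt_integral_of_dominated_loc_of_deriv_le (μ := volume)
      (F := e) (F' := et) (bound := fun x => C * wt x)
      (Metric.ball_mem_nhds t0 one_pos)
      (Eventually.of_forall fun t => (he.D t).1.aestronglyMeasurable)
      (he.D t0).int (het.D t0).1.aestronglyMeasurable
      (Eventually.of_forall fun x t ht => hC t (abs_le_of_ball ht) x)
      (wt_int.const_mul C) (Eventually.of_forall fun x t _ => h1 t x)).2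
    have h0 : ∫ x, (et t0 x - s t0 x) = 0 :=
      integral_eq_zero_of_hasDerivAt_of_integrable (h2 t0) ((het.D t0).sub (hs.D t0)).int
        (hF.D t0).int
    rw [integral_sub (het.D t0).int (hs.D t0).int] at h0
    rwa [sub_eq_zero.1 h0] at this
  exact (intervalIntegral.integral_eq_sub_of_hasDerivAt (fun t _ => key t)
    (hs.cont_int.intervalIntegrable a b)).symm

end SK
end

section
open MeasureTheory Filter Topology
open scoped ContDiff

namespace SK

noncomputable def Av (σ : ℝ) (g : ℝ → ℝ) (x : ℝ) : ℝ :=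
  ∫ s in Set.Ioi (0 : ℝ), Real.exp (-s) * g (x + σ * s)

lemma exp_int : IntegrableOn (fun s : ℝ => Real.exp (-s)) (Set.Ioi 0) :=
  integrableOn_exp_neg_Ioi 0

lemma Av_integrable {σ : ℝ} {g : ℝ → ℝ} (hg : D g) (x : ℝ) :
    IntegrableOn (fun s => Real.exp (-s) * g (x + σ * s)) (Set.Ioi 0) := by
  obtain ⟨hc, C, hC⟩ := hg
  refine (exp_int.const_mul C).mono' (Continuous.aestronglyMeasurable (by fun_prop))
    (Eventually.of_forall fun s => ?_)
  have h0 := bd_nonneg hC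
  rw [Real.norm_eq_abs, abs_mul, Real.abs_exp, mul_comm]
  refine mul_le_mul_of_nonneg_right ((hC _).trans ?_) (Real.exp_pos _).le
  exact mul_le_of_le_one_right h0 (wt_le _)

lemma wt_shift (x y : ℝ) : wt (x + y) ≤ 2 * (1 + y ^ 2) * wt x := by
  unfold wt
  rw [← div_eq_mul_inv, ← one_div, div_le_div_iff₀ (by positivity) (by positivity)]
  nlinarith [sq_nonneg (x + 2 * y), mul_nonneg (sq_nonneg y) (sq_nonneg (x+y)), sq_nonneg (x + y)]

lemma exp2_int : IntegrableOn (fun s : ℝ => Real.exp (-s) * s ^ 2) (Set.Ioi 0) := by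
  have := Real.GammaIntegral_convergent (s := 3) (by norm_num)
  refine this.congr_fun (fun s hs => ?_) measurableSet_Ioi
  simp only
  congr 1
  rw [show (3 : ℝ) - 1 = ((2 : ℕ) : ℝ) by norm_num, Real.rpow_natCast]
lemma exp2_val : ∫ s in Set.Ioi (0 : ℝ), Real.exp (-s) * s ^ 2 = 2 := by
  have := Real.Gamma_eq_integral (s := 3) (by norm_num)
  rw [show (3 : ℝ) = ((2 : ℕ) : ℝ) + 1 by norm_num, Real.Gamma_nat_eq_factorial] at this
  rw [show (2 : ℝ) = ((Nat.factorial 2 : ℕ) : ℝ) by norm_num [Nat.factorial], this]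
  refine setIntegral_congr_fun measurableSet_Ioi (fun s hs => ?_)
  simp

lemma Av_bd {σ : ℝ} (hσ : |σ| ≤ 1) {g : ℝ → ℝ} {C : ℝ} (hC : ∀ x, |g x| ≤ C * wt x)
    (x : ℝ) : |Av σ g x| ≤ 6 * C * wt x := by
  have h0 := bd_nonneg hC
  have hb : IntegrableOn (fun s : ℝ => 2 * C * wt x * (Real.exp (-s) + Real.exp (-s) * s ^ 2))
      (Set.Ioi 0) := (exp_int.add exp2_int).const_mul _
  have h1 : ‖Av σ g x‖ ≤
      ∫ s in Set.Ioi (0 : ℝ), 2 * C * wt x * (Real.exp (-s) + Real.exp (-s) * s ^ 2) := by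
    refine norm_integral_le_of_norm_le hb (Eventually.of_forall fun s => ?_)
    rw [Real.norm_eq_abs, abs_mul, Real.abs_exp]
    have h2 : |g (x + σ * s)| ≤ C * (2 * (1 + s ^ 2) * wt x) := by
      refine (hC _).trans (mul_le_mul_of_nonneg_left ((wt_shift x _).trans ?_) h0)
      refine mul_le_mul_of_nonneg_right ?_ (wt_pos x).le
      have : (σ * s) ^ 2 ≤ s ^ 2 := by
        rw [mul_pow]
        have : σ ^ 2 ≤ 1 := by rw [← sq_abs]; nlinarith [abs_nonneg σ]
        nlinarith [sq_nonneg s]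
      linarith
    calc _ ≤ Real.exp (-s) * (C * (2 * (1 + s ^ 2) * wt x)) :=
          mul_le_mul_of_nonneg_left h2 (Real.exp_pos _).le
      _ = _ := by ring
  rw [integral_const_mul, integral_add exp_int exp2_int, exp2_val, integral_exp_neg_Ioi_zero] at h1
  rw [Real.norm_eq_abs] at h1
  linarith

lemma Av_ibp {σ : ℝ} {g g' : ℝ → ℝ} (hg : D g) (hg' : D g')
    (hd : ∀ x, HasDerivAt g (g' x) x) (x : ℝ) :
    σ * Av σ g' x = Av σ g x - g x := by
  have hder : ∀ s ∈ Set.Ici (0 : ℝ), HasDerivAt (fun s => Real.exp (-s) * g (x + σ * s))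
      (σ * (Real.exp (-s) * g' (x + σ * s)) - Real.exp (-s) * g (x + σ * s)) s := by
    intro s _
    have h1 : HasDerivAt (fun s : ℝ => Real.exp (-s)) (Real.exp (-s) * (-1)) s :=
      (hasDerivAt_neg s).exp
    have h2 : HasDerivAt (fun s : ℝ => g (x + σ * s)) (g' (x + σ * s) * σ) s := by
      have h3 : HasDerivAt (fun s : ℝ => x + σ * s) σ s := by
        simpa using ((hasDerivAt_id s).const_mul σ).const_add x
      exact (hd (x + σ * s)).comp s h3
    exact (h1.mul h2).congr_deriv (by ring)
  have hi : IntegrableOn (fun s => σ * (Real.exp (-s) * g' (x + σ * s)) -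
      Real.exp (-s) * g (x + σ * s)) (Set.Ioi 0) :=
    ((Av_integrable hg' x).const_mul σ).sub (Av_integrable hg x)
  have hlim : Tendsto (fun s => Real.exp (-s) * g (x + σ * s)) atTop (𝓝 0) := by
    obtain ⟨hc, C, hC⟩ := hg
    have h0 := bd_nonneg hC
    have : Tendsto (fun s : ℝ => C * Real.exp (-s)) atTop (𝓝 0) := by
      simpa using (Real.tendsto_exp_neg_atTop_nhds_zero).const_mul C
    refine squeeze_zero_norm (fun s => ?_) this
    rw [Real.norm_eq_abs, abs_mul, Real.abs_exp, mul_comm]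
    refine mul_le_mul_of_nonneg_right ((hC _).trans ?_) (Real.exp_pos _).le
    exact mul_le_of_le_one_right h0 (wt_le _)
  have := integral_Ioi_of_hasDerivAt_of_tendsto' hder hi hlim
  rw [integral_sub ((Av_integrable hg' x).const_mul σ) (Av_integrable hg x),
    integral_const_mul] at this
  simp at this
  unfold Av
  linarith

/-- general parametric facts -/
lemma CS.bd {f : ℝ → ℝ → ℝ} (h : CS f) (A : ℝ) : ∃ C, ∀ t, |t| ≤ A → ∀ x, |f t x| ≤ C := by
  obtain ⟨C, hC⟩ := h.dec.2 A
  refine ⟨|C|, fun t ht x => (hC t ht x).trans ?_⟩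
  calc C * wt x ≤ |C| * 1 :=
      mul_le_mul (le_abs_self C) (wt_le x) (wt_pos x).le (abs_nonneg _)
    _ = |C| := mul_one _

lemma Av_cont {σ : ℝ} {f : ℝ → ℝ → ℝ} (h : CS f) :
    Continuous (fun p : ℝ × ℝ => Av σ (f p.1) p.2) := by
  rw [continuous_iff_continuousAt]
  rintro ⟨t0, x0⟩
  obtain ⟨C, hC⟩ := h.bd (|t0| + 1)
  refine continuousAt_of_dominated (bound := fun s => C * Real.exp (-s)) ?_ ?_
    (exp_int.const_mul C) ?_
  · exact Eventually.of_forall fun p => (Av_integrable (h.dec.D p.1) p.2).aestronglyMeasurable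
  · have : Metric.ball t0 1 ×ˢ Set.univ ∈ 𝓝 (t0, x0) :=
      prod_mem_nhds (Metric.ball_mem_nhds t0 one_pos) univ_mem
    filter_upwards [this] with p hp
    refine Eventually.of_forall fun s => ?_
    rw [Real.norm_eq_abs, abs_mul, Real.abs_exp, mul_comm]
    exact mul_le_mul_of_nonneg_right (hC _ (abs_le_of_ball hp.1) _) (Real.exp_pos _).le
  · refine Eventually.of_forall fun s => ContinuousAt.mul continuousAt_const ?_
    have : Continuous (fun p : ℝ × ℝ => (p.1, p.2 + σ * s)) := by fun_prop
    exact (h.1.cont.comp this).continuousAt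

lemma Av_dec {σ : ℝ} (hσ : |σ| ≤ 1) {f : ℝ → ℝ → ℝ} (h : CS f) :
    Dec (fun t x => Av σ (f t) x) := by
  refine ⟨Av_cont h, fun A => ?_⟩
  obtain ⟨C, hC⟩ := h.dec.2 A
  exact ⟨6 * C, fun t ht x => Av_bd hσ (hC t ht) x⟩

lemma Av_ht {σ : ℝ} {f : ℝ → ℝ → ℝ} (h : CS f) (t0 x : ℝ) :
    HasDerivAt (fun t => Av σ (f t) x) (Av σ (dt f t0) x) t0 := by
  obtain ⟨C, hC⟩ := h.dt.bd (|t0| + 1)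
  exact (hasDerivAt_integral_of_dominated_loc_of_deriv_le
      (F := fun t s => Real.exp (-s) * f t (x + σ * s))
      (F' := fun t s => Real.exp (-s) * dt f t (x + σ * s))
      (bound := fun s => C * Real.exp (-s))
      (Metric.ball_mem_nhds t0 one_pos)
      (Eventually.of_forall fun t => (Av_integrable (h.dec.D t) x).aestronglyMeasurable)
      (Av_integrable (h.dec.D t0) x)
      (Av_integrable (h.dt.dec.D t0) x).aestronglyMeasurable
      (Eventually.of_forall fun s t ht => by
        rw [Real.norm_eq_abs, abs_mul, Real.abs_exp, mul_comm]
        exact mul_le_mul_of_nonneg_right (hC _ (abs_le_of_ball ht) _) (Real.exp_pos _).le)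
      (exp_int.const_mul C)
      (Eventually.of_forall fun s t _ => (h.1.ht t (x + σ * s)).const_mul _)).2

lemma Av_hx {σ : ℝ} {f : ℝ → ℝ → ℝ} (h : CS f) (t x0 : ℝ) :
    HasDerivAt (Av σ (f t)) (Av σ (dx f t) x0) x0 := by
  obtain ⟨C, hC⟩ := h.dx.bd |t|
  exact (hasDerivAt_integral_of_dominated_loc_of_deriv_le
      (F := fun x s => Real.exp (-s) * f t (x + σ * s))
      (F' := fun x s => Real.exp (-s) * dx f t (x + σ * s))
      (bound := fun s => C * Real.exp (-s))
      (Metric.ball_mem_nhds x0 one_pos)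
      (Eventually.of_forall fun x => (Av_integrable (h.dec.D t) x).aestronglyMeasurable)
      (Av_integrable (h.dec.D t) x0)
      (Av_integrable (h.dx.dec.D t) x0).aestronglyMeasurable
      (Eventually.of_forall fun s x _ => by
        rw [Real.norm_eq_abs, abs_mul, Real.abs_exp, mul_comm]
        exact mul_le_mul_of_nonneg_right (hC _ le_rfl _) (Real.exp_pos _).le)
      (exp_int.const_mul C)
      (Eventually.of_forall fun s x _ => by
        have h3 : HasDerivAt (fun x : ℝ => x + σ * s) 1 x := (hasDerivAt_id x).add_const _
        have := (h.1.hx t (x + σ * s)).comp x h3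
        simpa using this.const_mul (Real.exp (-s)))).2

/-- the resolvent `(1 - h² ∂²)⁻¹` -/
noncomputable def Lm (h : ℝ) (g : ℝ → ℝ) (x : ℝ) : ℝ := 2⁻¹ * (Av h g x + Av (-h) g x)
noncomputable def L (h : ℝ) (f : ℝ → ℝ → ℝ) : ℝ → ℝ → ℝ := fun t x => Lm h (f t) x

lemma Lm_bd {h : ℝ} (h0 : 0 < h) (h1 : h ≤ 1) {g : ℝ → ℝ} {C : ℝ} (hC : ∀ x, |g x| ≤ C * wt x)
    (x : ℝ) : |Lm h g x| ≤ 6 * C * wt x := by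
  have a1 := Av_bd (σ := h) (by rw [abs_of_pos h0]; exact h1) hC x
  have a2 := Av_bd (σ := -h) (by rw [abs_neg, abs_of_pos h0]; exact h1) hC x
  unfold Lm
  rw [abs_le] at *
  constructor <;> linarith

lemma Lm_add {h : ℝ} {f g : ℝ → ℝ} (hf : D f) (hg : D g) (x : ℝ) :
    Lm h (fun x => f x + g x) x = Lm h f x + Lm h g x := by
  unfold Lm Av
  simp only [mul_add]
  rw [integral_add (Av_integrable hf x) (Av_integrable hg x),
    integral_add (Av_integrable hf x) (Av_integrable hg x)]
  ring
lemma Lm_cmul {h c : ℝ} {f : ℝ → ℝ} (x : ℝ) :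
    Lm h (fun x => c * f x) x = c * Lm h f x := by
  unfold Lm Av
  simp only [mul_left_comm _ c]
  rw [integral_const_mul, integral_const_mul]
  ring

lemma Lm_ode {h : ℝ} (h0 : 0 < h) {g g1 g2 : ℝ → ℝ} (hg : D g) (hg1 : D g1) (hg2 : D g2)
    (d1 : ∀ x, HasDerivAt g (g1 x) x) (d2 : ∀ x, HasDerivAt g1 (g2 x) x) (x : ℝ) :
    Lm h g x - h ^ 2 * Lm h g2 x = g x := by
  have e1 := Av_ibp (σ := h) hg hg1 d1 x
  have e2 := Av_ibp (σ := -h) hg hg1 d1 x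
  have e3 := Av_ibp (σ := h) hg1 hg2 d2 x
  have e4 := Av_ibp (σ := -h) hg1 hg2 d2 x
  unfold Lm
  linear_combination (2⁻¹ : ℝ) * (-e1 - e2) - 2⁻¹ * h * e3 + 2⁻¹ * h * e4

lemma L_dec {h : ℝ} (h0 : 0 < h) (h1 : h ≤ 1) {f : ℝ → ℝ → ℝ} (hf : CS f) : Dec (L h f) :=
  ((Av_dec (by rw [abs_of_pos h0]; exact h1) hf).add
    (Av_dec (by rw [abs_neg, abs_of_pos h0]; exact h1) hf)).cmul 2⁻¹
lemma L_ht {h : ℝ} {f : ℝ → ℝ → ℝ} (hf : CS f) (t x : ℝ) :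
    HasDerivAt (fun s => L h f s x) (L h (dt f) t x) t :=
  ((Av_ht hf t x).add (Av_ht hf t x)).const_mul _
lemma L_hx {h : ℝ} {f : ℝ → ℝ → ℝ} (hf : CS f) (t x : ℝ) :
    HasDerivAt (L h f t) (L h (dx f) t x) x :=
  ((Av_hx hf t x).add (Av_hx hf t x)).const_mul _
lemma L_ode {h : ℝ} (h0 : 0 < h) {f : ℝ → ℝ → ℝ} (hf : CS f) (t x : ℝ) :
    L h f t x - h ^ 2 * L h (dx (dx f)) t x = f t x :=
  Lm_ode h0 (hf.dec.D t) (hf.dx.dec.D t) (hf.dx.dx.dec.D t) (hf.1.hx t) (hf.dx.1.hx t) x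
lemma L_add {h : ℝ} {f g : ℝ → ℝ → ℝ} (hf : CS f) (hg : CS g) (t x : ℝ) :
    L h (fun t x => f t x + g t x) t x = L h f t x + L h g t x :=
  Lm_add (hf.dec.D t) (hg.dec.D t) x
lemma L_cmul {h c : ℝ} {f : ℝ → ℝ → ℝ} (t x : ℝ) :
    L h (fun t x => c * f t x) t x = c * L h f t x := Lm_cmul x

/-- L² bounds -/
lemma L_sq {h : ℝ} (h0 : 0 < h) (h1 : h ≤ 1) {f : ℝ → ℝ → ℝ} (hf : CS f) (t : ℝ) :
    (∫ x, L h f t x ^ 2) + 2 * h ^ 2 * (∫ x, L h (dx f) t x ^ 2) +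
      h ^ 4 * (∫ x, L h (dx (dx f)) t x ^ 2) = ∫ x, f t x ^ 2 := by
  have d0 := (L_dec h0 h1 hf).D t
  have d1 := (L_dec h0 h1 hf.dx).D t
  have d2 := (L_dec h0 h1 hf.dx.dx).D t
  have hz : ∫ x, (L h (dx f) t x ^ 2 + L h f t x * L h (dx (dx f)) t x) = 0 := by
    refine integral_eq_zero_of_hasDerivAt_of_integrable
      (f := fun x => L h f t x * L h (dx f) t x) (fun x => ?_) (d1.sq.add (d0.mul d2)).int
      (d0.mul d1).int
    exact ((L_hx hf t x).mul (L_hx hf.dx t x)).congr_deriv (by ring)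
  have e : (fun x => f t x ^ 2) = fun x => (L h f t x ^ 2 + 2 * h ^ 2 * L h (dx f) t x ^ 2 +
      h ^ 4 * L h (dx (dx f)) t x ^ 2) -
      2 * h ^ 2 * (L h (dx f) t x ^ 2 + L h f t x * L h (dx (dx f)) t x) := by
    funext x
    rw [← L_ode h0 hf t x]; ring
  rw [e, integral_sub ((d0.sq.add (d1.sq.cmul _)).add (d2.sq.cmul _)).int
    ((d1.sq.add (d0.mul d2)).cmul _).int, integral_const_mul (2 * h ^ 2), hz,
    integral_add (d0.sq.add (d1.sq.cmul _)).int (d2.sq.cmul _).int,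
    integral_add d0.sq.int (d1.sq.cmul _).int, integral_const_mul, integral_const_mul]
  ring

lemma sup_sq {g g' : ℝ → ℝ} (hg : D g) (hg' : D g') (hd : ∀ x, HasDerivAt g (g' x) x) (x : ℝ) :
    g x ^ 2 ≤ (∫ y, g y ^ 2) + ∫ y, g' y ^ 2 := by
  have hder : ∀ y ∈ Set.Iic x, HasDerivAt (fun y => g y ^ 2) (2 * (g y * g' y)) y := by
    intro y _
    exact ((hd y).pow 2).congr_deriv (by simp; ring)
  have hlim : Tendsto (fun y => g y ^ 2) atBot (𝓝 0) := by
    obtain ⟨_, C, hC⟩ := hg.sq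
    have h0 : Tendsto wt atBot (𝓝 0) := by
      unfold wt
      refine Tendsto.inv_tendsto_atTop (tendsto_atTop_add_const_left _ _ ?_)
      exact ((tendsto_pow_atTop (two_ne_zero)).comp (tendsto_abs_atBot_atTop (G := ℝ))).congr
        (fun x => by simp [sq_abs])
    refine squeeze_zero_norm hC (by simpa using h0.const_mul C)
  have hi : Integrable (fun y => 2 * (g y * g' y)) := ((hg.mul hg').cmul 2).int
  have := integral_Iic_of_hasDerivAt_of_tendsto' hder hi.integrableOn hlim
  rw [sub_zero] at this
  rw [← this, ← integral_add hg.sq.int hg'.sq.int]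
  calc _ ≤ ∫ y in Set.Iic x, (g y ^ 2 + g' y ^ 2) :=
        integral_mono hi.integrableOn (hg.sq.add hg'.sq).int.integrableOn
          (fun y => by simp only; nlinarith [sq_nonneg (g y - g' y)])
    _ ≤ _ := setIntegral_le_integral (hg.sq.add hg'.sq).int
          (Eventually.of_forall fun y => by simp only [Pi.zero_apply]; positivity)

end SK
end

section
open MeasureTheory Filter Topology
open scoped ContDiff

namespace SK

section E1
variable (h γ : ℝ) (f r j μ1 μ0 l : ℝ → ℝ → ℝ)

noncomputable def W1 : ℝ → ℝ → ℝ := fun t x =>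
  2⁻¹ * L h f t x ^ 2 - h ^ 2 / 6 * L h (dx f) t x ^ 2
    - h ^ 2 / 3 * (L h f t x * L h (dx (dx f)) t x)
noncomputable def e1 : ℝ → ℝ → ℝ := fun t x =>
  2⁻¹ * L h (dx f) t x ^ 2 + 2⁻¹ * h ^ 2 * L h (dx (dx f)) t x ^ 2 - 6⁻¹ * L h f t x ^ 3
    - h ^ 2 / 6 * (L h f t x * L h (dx f) t x ^ 2) + γ * (L h f t x * r t x)
noncomputable def e1t : ℝ → ℝ → ℝ := fun t x =>
  L h (dx f) t x * L h (dx (dt f)) t x + h ^ 2 * (L h (dx (dx f)) t x * L h (dx (dx (dt f))) t x)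
    - 2⁻¹ * (L h f t x ^ 2 * L h (dt f) t x)
    - h ^ 2 / 6 * (L h (dt f) t x * L h (dx f) t x ^ 2
        + 2 * (L h f t x * (L h (dx f) t x * L h (dx (dt f)) t x)))
    + γ * (L h (dt f) t x * r t x + L h f t x * dt r t x)
noncomputable def n1 : ℝ → ℝ → ℝ := L h (fun t x => - (f t x * dx f t x) + γ * dx r t x)
noncomputable def main1 : ℝ → ℝ → ℝ := fun t x =>
  γ * (n1 h γ f r t x * r t x) + γ * (L h (dx f) t x * j t x) - W1 h f t x * n1 h γ f r t x
noncomputable def err1 : ℝ → ℝ → ℝ := fun t x =>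
  - (W1 h f t x * (L h (dx μ1) t x + L h μ0 t x)) - L h (dx (dx f)) t x * μ0 t x
    + L h (dx (dx (dx f))) t x * μ1 t x + γ * ((L h (dx μ1) t x + L h μ0 t x) * r t x)
    + γ * (L h f t x * l t x)
noncomputable def F1 : ℝ → ℝ → ℝ := fun t x =>
  L h (dx f) t x * L h (dt f) t x + 2⁻¹ * L h (dx (dx f)) t x ^ 2
  - h ^ 2 * (L h (dx (dx f)) t x * L h (dx (dx (dx (dx f)))) t x)
  + 2⁻¹ * h ^ 2 * L h (dx (dx (dx f))) t x ^ 2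
  + 2⁻¹ * (L h (dx (dx f)) t x * f t x ^ 2)
  + 2⁻¹ * h ^ 2 * (L h f t x * L h (dx (dx f)) t x ^ 2)
  - h ^ 4 / 6 * L h (dx (dx f)) t x ^ 3
  - h ^ 2 / 3 * (L h f t x * (L h (dx f) t x * L h (dt f) t x))
  - h ^ 2 / 6 * (L h (dx f) t x ^ 2 * L h (dx (dx f)) t x)
  - h ^ 2 / 6 * (L h f t x * L h (dx (dx f)) t x ^ 2)
  - γ * (L h (dx (dx f)) t x * r t x) - γ * (L h f t x * j t x)
  - L h (dx (dx f)) t x * μ1 t x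

variable {h γ f r j μ1 μ0 l}

lemma n1_cs (hf : CS f) (hr : CS r) :
    CS (fun t x => - (f t x * dx f t x) + γ * dx r t x) :=
  (hf.mul hf.1.dx).neg.add (hr.dx.cmul γ)

lemma W1_dec (h0 : 0 < h) (h1 : h ≤ 1) (hf : CS f) : Dec (W1 h f) :=
  (((L_dec h0 h1 hf).sq.cmul _).sub ((L_dec h0 h1 hf.dx).sq.cmul _)).sub
    (((L_dec h0 h1 hf).mul (L_dec h0 h1 hf.dx.dx)).cmul _)

lemma main1_dec (h0 : 0 < h) (h1 : h ≤ 1) (hf : CS f) (hr : CS r) (hj : CS j) :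
    Dec (main1 h γ f r j) := by
  have hn : Dec (n1 h γ f r) := L_dec h0 h1 (n1_cs hf hr)
  exact (((hn.mul hr.dec).cmul _).add (((L_dec h0 h1 hf.dx).mul hj.dec).cmul _)).sub
    ((W1_dec h0 h1 hf).mul hn)

lemma err1_dec (h0 : 0 < h) (h1 : h ≤ 1) (hf : CS f) (hr : CS r) (h2 : CS μ1) (h3 : CS μ0)
    (h4 : CS l) : Dec (err1 h γ f r μ1 μ0 l) := by
  have d1 := L_dec h0 h1 h2.dx
  have d2 := L_dec h0 h1 h3
  exact (((((W1_dec h0 h1 hf).mul (d1.add d2)).neg.sub ((L_dec h0 h1 hf.dx.dx).mul h3.dec)).add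
    ((L_dec h0 h1 hf.dx.dx.dx).mul h2.dec)).add (((d1.add d2).mul hr.dec).cmul _)).add
    (((L_dec h0 h1 hf).mul h4.dec).cmul _)

lemma e1_dec (h0 : 0 < h) (h1 : h ≤ 1) (hf : CS f) (hr : CS r) : Dec (e1 h γ f r) := by
  have z0 := L_dec h0 h1 hf
  have z1 := L_dec h0 h1 hf.dx
  have z2 := L_dec h0 h1 hf.dx.dx
  exact ((((z1.sq.cmul _).add (z2.sq.cmul _)).sub (z0.cube.cmul _)).sub
    ((z0.mul z1.sq).cmul _)).add ((z0.mul hr.dec).cmul _)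

lemma e1_bal (h0 : 0 < h) (h1 : h ≤ 1) (hf : CS f) (hr : CS r) (hj : CS j) (hm1 : CS μ1)
    (hm0 : CS μ0) (hl : CS l)
    (ef : ∀ t x, dt f t x = - dx (dx (dx f)) t x + (- (f t x * dx f t x) + γ * dx r t x)
      + (dx μ1 t x + μ0 t x))
    (er : ∀ t x, dt r t x = - dx j t x + l t x) (a b : ℝ) :
    (∫ x, e1 h γ f r b x) - (∫ x, e1 h γ f r a x) =
      ∫ t in a..b, ∫ x, (main1 h γ f r j t x + err1 h γ f r μ1 μ0 l t x) := by
  have z0 := L_dec h0 h1 hf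
  have z1 := L_dec h0 h1 hf.dx
  have z2 := L_dec h0 h1 hf.dx.dx
  have z3 := L_dec h0 h1 hf.dx.dx.dx
  have z4 := L_dec h0 h1 hf.dx.dx.dx.dx
  have y0 := L_dec h0 h1 hf.dt
  have y1 := L_dec h0 h1 hf.dt.dx
  have y2 := L_dec h0 h1 hf.dt.dx.dx
  have c1 : dt (dx f) = dx (dt f) := hf.1.comm
  have c2 : dt (dx (dx f)) = dx (dx (dt f)) := by rw [hf.dx.1.comm, c1]
  have het : Dec (e1t h γ f r) :=
    ((((z1.mul y1).add ((z2.mul y2).cmul _)).sub ((z0.sq.mul y0).cmul _)).sub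
      (((y0.mul z1.sq).add ((z0.mul (z1.mul y1)).cmul 2)).cmul _)).add
      (((y0.mul hr.dec).add (z0.mul hr.dt.dec)).cmul _)
  have hF : Dec (F1 h γ f r j μ1) :=
    ((((((((((((z1.mul y0).add (z2.sq.cmul _)).sub ((z2.mul z4).cmul _)).add (z3.sq.cmul _)).add
      ((z2.mul hf.dec.sq).cmul _)).add ((z0.mul z2.sq).cmul _)).sub (z2.cube.cmul _)).sub
      ((z0.mul (z1.mul y0)).cmul _)).sub ((z1.sq.mul z2).cmul _)).sub ((z0.mul z2.sq).cmul _)).sub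
      ((z2.mul hr.dec).cmul _)).sub ((z0.mul hj.dec).cmul _)).sub (z2.mul hm1.dec)
  refine balance (e1_dec h0 h1 hf hr) het hF
    ((main1_dec h0 h1 hf hr hj).add (err1_dec h0 h1 hf hr hm1 hm0 hl)) ?_ ?_ a b
  · intro t x
    have k0 := L_ht (h := h) hf t x
    have k1 := L_ht (h := h) hf.dx t x
    have k2 := L_ht (h := h) hf.dx.dx t x
    rw [c1] at k1
    rw [c2] at k2
    have kr := hr.1.ht t x
    refine ((((((k1.pow 2).const_mul 2⁻¹).add ((k2.pow 2).const_mul (2⁻¹ * h ^ 2))).sub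
      ((k0.pow 3).const_mul 6⁻¹)).sub ((k0.mul (k1.pow 2)).const_mul (h ^ 2 / 6))).add
      ((k0.mul kr).const_mul γ)).congr_deriv ?_
    simp only [e1t, Pi.pow_apply]
    push_cast
    ring
  · intro t x
    have k0 := L_hx (h := h) hf t x
    have k1 := L_hx (h := h) hf.dx t x
    have k2 := L_hx (h := h) hf.dx.dx t x
    have k3 := L_hx (h := h) hf.dx.dx.dx t x
    have k4 := L_hx (h := h) hf.dx.dx.dx.dx t x
    have ky := L_hx (h := h) hf.dt t x
    have kr := hr.1.hx t x
    have kf := hf.1.hx t x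
    have kj := hj.1.hx t x
    have km := hm1.1.hx t x
    have o0 := L_ode h0 hf t x
    have o1 := L_ode h0 hf.dx t x
    have o3 := L_ode h0 hf.dx.dx.dx t x
    have oy := L_ode h0 hf.dt t x
    have hy : L h (dt f) t x = - L h (dx (dx (dx f))) t x + n1 h γ f r t x
        + (L h (dx μ1) t x + L h μ0 t x) := by
      have : dt f = fun t x => (-1 * dx (dx (dx f)) t x + (- (f t x * dx f t x) + γ * dx r t x))
        + (dx μ1 t x + μ0 t x) := by
        funext t x; rw [ef]; ring
      rw [this, L_add ((hf.dx.dx.dx.cmul (-1)).add (n1_cs hf hr)) (hm1.dx.add hm0),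
        L_add (hf.dx.dx.dx.cmul (-1)) (n1_cs hf hr), L_add hm1.dx hm0, L_cmul]
      unfold n1; ring
    have ef' := ef t x
    have er' := er t x
    refine (((((((((((((k1.mul ky).add ((k2.pow 2).const_mul 2⁻¹)).sub
      ((k2.mul k4).const_mul (h ^ 2))).add ((k3.pow 2).const_mul (2⁻¹ * h ^ 2))).add
      ((k2.mul (kf.pow 2)).const_mul 2⁻¹)).add ((k0.mul (k2.pow 2)).const_mul (2⁻¹ * h ^ 2))).sub
      ((k2.pow 3).const_mul (h ^ 4 / 6))).sub ((k0.mul (k1.mul ky)).const_mul (h ^ 2 / 3))).sub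
      (((k1.pow 2).mul k2).const_mul (h ^ 2 / 6))).sub
      ((k0.mul (k2.pow 2)).const_mul (h ^ 2 / 6))).sub ((k2.mul kr).const_mul γ)).sub
      ((k0.mul kj).const_mul γ)).sub (k2.mul km)).congr_deriv ?_
    simp only [e1t, main1, err1, W1, Pi.pow_apply, Pi.mul_apply]
    push_cast
    rw [hy] at oy ⊢
    rw [er']
    generalize L h f t x = z0 at *
    generalize L h (dx f) t x = z1 at *
    generalize L h (dx (dx f)) t x = z2 at *
    generalize L h (dx (dx (dx f))) t x = z3 at *
    generalize L h (dx (dx (dx (dx f)))) t x = z4 at *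
    generalize L h (dx (dx (dx (dx (dx f))))) t x = z5 at *
    generalize L h (dx (dt f)) t x = y1 at *
    generalize L h (dx (dx (dt f))) t x = y2 at *
    generalize n1 h γ f r t x = n at *
    generalize L h (dx μ1) t x = m1 at *
    generalize L h μ0 t x = m0 at *
    rw [ef', ← o3, ← o1, ← o0] at oy
    rw [← o0, ← o1]
    linear_combination z2 * oy

lemma young {a b c : ℝ} (hc : 0 < c) : |a * b| ≤ c * a ^ 2 + c⁻¹ * b ^ 2 := by
  have h1 : 0 ≤ c⁻¹ * (c * |a| - |b|) ^ 2 := by positivity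
  have h2 : c⁻¹ * (c * |a| - |b|) ^ 2 = c * a ^ 2 + c⁻¹ * b ^ 2 - 2 * (|a| * |b|) := by
    rw [← sq_abs a, ← sq_abs b]; field_simp; ring
  rw [abs_mul]
  have := mul_nonneg (abs_nonneg a) (abs_nonneg b)
  linarith

lemma isq_nonneg (g : ℝ → ℝ) : 0 ≤ ∫ x, g x ^ 2 := integral_nonneg fun x => sq_nonneg _

lemma L_sq0 (h0 : 0 < h) (h1 : h ≤ 1) (hf : CS f) (t : ℝ) :
    (∫ x, L h f t x ^ 2) ≤ ∫ x, f t x ^ 2 := by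
  have := L_sq h0 h1 hf t
  have a1 := mul_nonneg (sq_nonneg h) (isq_nonneg (L h (dx f) t))
  have a2 := mul_nonneg (pow_nonneg h0.le 4) (isq_nonneg (L h (dx (dx f)) t))
  linarith
lemma L_sq1 (h0 : 0 < h) (h1 : h ≤ 1) (hf : CS f) (t : ℝ) :
    h ^ 2 * (∫ x, L h (dx f) t x ^ 2) ≤ ∫ x, f t x ^ 2 := by
  have := L_sq h0 h1 hf t
  have a0 := isq_nonneg (L h f t)
  have a1 := mul_nonneg (sq_nonneg h) (isq_nonneg (L h (dx f) t))
  have a2 := mul_nonneg (pow_nonneg h0.le 4) (isq_nonneg (L h (dx (dx f)) t))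
  linarith
lemma L_sq2 (h0 : 0 < h) (h1 : h ≤ 1) (hf : CS f) (t : ℝ) :
    h ^ 4 * (∫ x, L h (dx (dx f)) t x ^ 2) ≤ ∫ x, f t x ^ 2 := by
  have := L_sq h0 h1 hf t
  have a0 := isq_nonneg (L h f t)
  have a1 := mul_nonneg (sq_nonneg h) (isq_nonneg (L h (dx f) t))
  linarith

lemma W1_sq {K : ℝ} (h0 : 0 < h) (h1 : h ≤ 1) (hf : CS f) (t : ℝ) (k0 : ∫ x, f t x ^ 2 ≤ K)
    (k1 : ∫ x, dx f t x ^ 2 ≤ K) : ∫ x, W1 h f t x ^ 2 ≤ 6 * K ^ 2 := by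
  have b0 := (L_sq0 h0 h1 hf t).trans k0
  have b1 := (L_sq0 h0 h1 hf.dx t).trans k1
  have b2 := (L_sq1 h0 h1 hf.dx t).trans k1
  have d0 := (L_dec h0 h1 hf).D t
  have d1 := (L_dec h0 h1 hf.dx).D t
  have d2 := (L_dec h0 h1 hf.dx.dx).D t
  have hK : 0 ≤ K := (isq_nonneg _).trans k0
  have s0 : ∀ x, L h f t x ^ 2 ≤ 2 * K := fun x => by
    linarith [sup_sq d0 d1 (L_hx hf t) x]
  have hh : h ^ 2 ≤ 1 := by nlinarith
  have s1 : ∀ x, h ^ 2 * L h (dx f) t x ^ 2 ≤ 2 * K := fun x => by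
    have := mul_le_mul_of_nonneg_left (sup_sq d1 d2 (L_hx hf.dx t) x) (sq_nonneg h)
    have h3 : h ^ 2 * (∫ x, L h (dx f) t x ^ 2) ≤ 1 * K :=
      mul_le_mul hh b1 (isq_nonneg _) zero_le_one
    linarith
  have hp : ∀ x, W1 h f t x ^ 2 ≤ 2 * K * (L h f t x ^ 2 + L h (dx f) t x ^ 2 +
      h ^ 2 * L h (dx (dx f)) t x ^ 2) := by
    intro x
    have q0 := s0 x
    have q1 := s1 x
    unfold W1
    generalize L h f t x = z0 at *
    generalize L h (dx f) t x = z1 at *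
    generalize L h (dx (dx f)) t x = z2 at *
    have e1 : (z0 ^ 2) ^ 2 ≤ 2 * K * z0 ^ 2 := by nlinarith [sq_nonneg z0]
    have e2 : (h ^ 2 * z1 ^ 2) ^ 2 ≤ 2 * K * z1 ^ 2 := by
      have : h ^ 2 * z1 ^ 2 ≤ z1 ^ 2 := by nlinarith [sq_nonneg z1]
      have h3 : 0 ≤ h ^ 2 * z1 ^ 2 := by positivity
      nlinarith
    have e3 : (h ^ 2 * (z0 * z2)) ^ 2 ≤ 2 * K * (h ^ 2 * z2 ^ 2) := by
      have e : (h ^ 2 * (z0 * z2)) ^ 2 = z0 ^ 2 * (h ^ 2 * (h ^ 2 * z2 ^ 2)) := by ring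
      have h3 : 0 ≤ h ^ 2 * z2 ^ 2 := by positivity
      have h4 : h ^ 2 * (h ^ 2 * z2 ^ 2) ≤ 1 * (h ^ 2 * z2 ^ 2) :=
        mul_le_mul_of_nonneg_right hh h3
      rw [e]
      exact mul_le_mul q0 (by linarith) (by positivity) (by linarith)
    have e4 : 0 ≤ K * z0 ^ 2 := by positivity
    have e5 : 0 ≤ K * z1 ^ 2 := by positivity
    have e6 : 0 ≤ K * (h ^ 2 * z2 ^ 2) := by positivity
    have : (2⁻¹ * z0 ^ 2 - h ^ 2 / 6 * z1 ^ 2 - h ^ 2 / 3 * (z0 * z2)) ^ 2 ≤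
        3 * (4⁻¹ * (z0 ^ 2) ^ 2 + 36⁻¹ * (h ^ 2 * z1 ^ 2) ^ 2
          + 9⁻¹ * (h ^ 2 * (z0 * z2)) ^ 2) := by
      have a1 := sq_nonneg (2⁻¹ * z0 ^ 2 + h ^ 2 / 6 * z1 ^ 2)
      have a2 := sq_nonneg (2⁻¹ * z0 ^ 2 + h ^ 2 / 3 * (z0 * z2))
      have a3 := sq_nonneg (h ^ 2 / 6 * z1 ^ 2 - h ^ 2 / 3 * (z0 * z2))
      linarith
    linarith
  have dW := ((W1_dec h0 h1 hf).D t).sq.int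
  calc _ ≤ ∫ x, 2 * K * (L h f t x ^ 2 + L h (dx f) t x ^ 2 + h ^ 2 * L h (dx (dx f)) t x ^ 2) :=
        integral_mono dW (((d0.sq.add d1.sq).add (d2.sq.cmul _)).cmul _).int hp
    _ = 2 * K * ((∫ x, L h f t x ^ 2) + (∫ x, L h (dx f) t x ^ 2)
        + h ^ 2 * ∫ x, L h (dx (dx f)) t x ^ 2) := by
      rw [integral_const_mul, integral_add (d0.sq.add d1.sq).int (d2.sq.cmul _).int,
        integral_add d0.sq.int d1.sq.int, integral_const_mul]
    _ ≤ 2 * K * (K + K + K) := by gcongr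
    _ = _ := by ring

lemma main1_bd {K : ℝ} (h0 : 0 < h) (h1 : h ≤ 1) (hf : CS f) (hr : CS r) (hj : CS j) (t : ℝ)
    (k0 : ∫ x, f t x ^ 2 ≤ K) (k1 : ∫ x, dx f t x ^ 2 ≤ K) (k2 : ∫ x, r t x ^ 2 ≤ K)
    (k3 : ∫ x, j t x ^ 2 ≤ K) (k4 : ∫ x, (- (f t x * dx f t x) + γ * dx r t x) ^ 2 ≤ K) :
    |∫ x, main1 h γ f r j t x| ≤ 4 * |γ| * K + 6 * K ^ 2 + K := by
  have hn : CS _ := n1_cs (γ := γ) hf hr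
  have dn : D (n1 h γ f r t) := (L_dec h0 h1 hn).D t
  have d1 := (L_dec h0 h1 hf.dx).D t
  have dW := (W1_dec h0 h1 hf).D t
  have dr := hr.dec.D t
  have dj := hj.dec.D t
  have bn : ∫ x, n1 h γ f r t x ^ 2 ≤ K := (L_sq0 h0 h1 hn t).trans k4
  have b1 := (L_sq0 h0 h1 hf.dx t).trans k1
  have bW := W1_sq h0 h1 hf t k0 k1
  have hp : ∀ x, ‖main1 h γ f r j t x‖ ≤ |γ| * (n1 h γ f r t x ^ 2 + r t x ^ 2) +
      |γ| * (L h (dx f) t x ^ 2 + j t x ^ 2) + (W1 h f t x ^ 2 + n1 h γ f r t x ^ 2) := by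
    intro x
    have y1 := young (a := n1 h γ f r t x) (b := r t x) one_pos
    have y2 := young (a := L h (dx f) t x) (b := j t x) one_pos
    have y3 := young (a := W1 h f t x) (b := n1 h γ f r t x) one_pos
    simp only [inv_one, one_mul] at y1 y2 y3
    rw [Real.norm_eq_abs]; unfold main1
    calc _ ≤ |γ * (n1 h γ f r t x * r t x)| + |γ * (L h (dx f) t x * j t x)|
          + |W1 h f t x * n1 h γ f r t x| :=
        (abs_sub _ _).trans (add_le_add (abs_add_le _ _) le_rfl)
      _ ≤ _ := by
        rw [abs_mul γ, abs_mul γ]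
        gcongr
  have dB := (((dn.sq.add dr.sq).cmul |γ|).add ((d1.sq.add dj.sq).cmul |γ|))
  calc _ ≤ _ := norm_integral_le_of_norm_le (dB.add (dW.sq.add dn.sq)).int
        (Eventually.of_forall hp)
    _ = |γ| * ((∫ x, n1 h γ f r t x ^ 2) + ∫ x, r t x ^ 2) +
      |γ| * ((∫ x, L h (dx f) t x ^ 2) + ∫ x, j t x ^ 2) +
      ((∫ x, W1 h f t x ^ 2) + ∫ x, n1 h γ f r t x ^ 2) := by
      rw [← integral_add dn.sq.int dr.sq.int, ← integral_add d1.sq.int dj.sq.int,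
        ← integral_add dW.sq.int dn.sq.int, ← integral_const_mul, ← integral_const_mul,
        ← integral_add ((dn.sq.add dr.sq).cmul |γ|).int ((d1.sq.add dj.sq).cmul |γ|).int,
        ← integral_add dB.int (dW.sq.add dn.sq).int]
    _ ≤ |γ| * (K + K) + |γ| * (K + K) + (6 * K ^ 2 + K) := by
      gcongr
    _ = _ := by ring

lemma err1_bd {K : ℝ} (h0 : 0 < h) (h1 : h ≤ 1) (hf : CS f) (hr : CS r) (hm1 : CS μ1)
    (hm0 : CS μ0) (hl : CS l) (t : ℝ)
    (k0 : ∫ x, f t x ^ 2 ≤ K) (k1 : ∫ x, dx f t x ^ 2 ≤ K) (k2 : ∫ x, r t x ^ 2 ≤ K) :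
    |∫ x, err1 h γ f r μ1 μ0 l t x| ≤ (12 * K ^ 2 + 2 * K + 3 * |γ| * K + 4 + 3 * |γ|) *
      (h + h⁻¹ ^ 5 * ∫ x, (μ1 t x ^ 2 + μ0 t x ^ 2 + l t x ^ 2)) := by
  have dW := (W1_dec h0 h1 hf).D t
  have d0 := (L_dec h0 h1 hf).D t
  have d2 := (L_dec h0 h1 hf.dx.dx).D t
  have d3 := (L_dec h0 h1 hf.dx.dx.dx).D t
  have c1 := (L_dec h0 h1 hm1.dx).D t
  have c0 := (L_dec h0 h1 hm0).D t
  have dr := hr.dec.D t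
  have dm1 := hm1.dec.D t
  have dm0 := hm0.dec.D t
  have dl := hl.dec.D t
  have bW := W1_sq h0 h1 hf t k0 k1
  have b0 := (L_sq0 h0 h1 hf t).trans k0
  have b2 := (L_sq1 h0 h1 hf.dx t).trans k1
  have b3 := (L_sq2 h0 h1 hf.dx t).trans k1
  have bm1 := L_sq1 h0 h1 hm1 t
  have bm0 := L_sq0 h0 h1 hm0 t
  rw [integral_add (dm1.sq.add dm0.sq).int dl.sq.int, integral_add dm1.sq.int dm0.sq.int]
  have H1 : 1 ≤ h⁻¹ := (one_le_inv₀ h0).2 h1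
  have hp : ∀ x, ‖err1 h γ f r μ1 μ0 l t x‖ ≤
      (2 * h) * W1 h f t x ^ 2 + ((1 + |γ|) * h⁻¹) * L h (dx μ1) t x ^ 2 +
      ((1 + |γ|) * h⁻¹) * L h μ0 t x ^ 2 + h ^ 3 * L h (dx (dx f)) t x ^ 2 +
      (h ^ 3)⁻¹ * μ0 t x ^ 2 + h ^ 5 * L h (dx (dx (dx f))) t x ^ 2 + (h ^ 5)⁻¹ * μ1 t x ^ 2 +
      (2 * |γ| * h) * r t x ^ 2 + (|γ| * h) * L h f t x ^ 2 + (|γ| * h⁻¹) * l t x ^ 2 := by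
    intro x
    have y1 := young (a := W1 h f t x) (b := L h (dx μ1) t x) h0
    have y2 := young (a := W1 h f t x) (b := L h μ0 t x) h0
    have y3 := young (a := L h (dx (dx f)) t x) (b := μ0 t x) (pow_pos h0 3)
    have y4 := young (a := L h (dx (dx (dx f))) t x) (b := μ1 t x) (pow_pos h0 5)
    have y5 := young (a := r t x) (b := L h (dx μ1) t x) h0
    have y6 := young (a := r t x) (b := L h μ0 t x) h0
    have y7 := young (a := L h f t x) (b := l t x) h0
    rw [Real.norm_eq_abs]
    have e : err1 h γ f r μ1 μ0 l t x = -(W1 h f t x * L h (dx μ1) t x)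
      - W1 h f t x * L h μ0 t x - L h (dx (dx f)) t x * μ0 t x
      + L h (dx (dx (dx f))) t x * μ1 t x + γ * (r t x * L h (dx μ1) t x)
      + γ * (r t x * L h μ0 t x) + γ * (L h f t x * l t x) := by unfold err1; ring
    have y5' := mul_le_mul_of_nonneg_left y5 (abs_nonneg γ)
    have y6' := mul_le_mul_of_nonneg_left y6 (abs_nonneg γ)
    have y7' := mul_le_mul_of_nonneg_left y7 (abs_nonneg γ)
    rw [← abs_mul] at y5' y6' y7'
    rw [e]
    refine le_trans ((abs_add_le _ _).trans (add_le_add ((abs_add_le _ _).trans (add_le_add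
      ((abs_add_le _ _).trans (add_le_add ((abs_add_le _ _).trans (add_le_add ((abs_sub _ _).trans
      (add_le_add ((abs_sub _ _).trans (add_le_add ((abs_neg _).le.trans y1) y2)) y3)) y4)) y5'))
      y6')) y7')) (le_of_eq ?_)
    ring
  have D1 := (dW.sq.cmul (2 * h)).add (c1.sq.cmul ((1 + |γ|) * h⁻¹))
  have D2 := D1.add (c0.sq.cmul ((1 + |γ|) * h⁻¹))
  have D3 := D2.add (d2.sq.cmul (h ^ 3))
  have D4 := D3.add (dm0.sq.cmul (h ^ 3)⁻¹)
  have D5 := D4.add (d3.sq.cmul (h ^ 5))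
  have D6 := D5.add (dm1.sq.cmul (h ^ 5)⁻¹)
  have D7 := D6.add (dr.sq.cmul (2 * |γ| * h))
  have D8 := D7.add (d0.sq.cmul (|γ| * h))
  have D9 := D8.add (dl.sq.cmul (|γ| * h⁻¹))
  refine (norm_integral_le_of_norm_le D9.int (Eventually.of_forall hp)).trans ?_
  rw [integral_add D8.int (dl.sq.cmul _).int, integral_add D7.int (d0.sq.cmul _).int,
    integral_add D6.int (dr.sq.cmul _).int, integral_add D5.int (dm1.sq.cmul _).int,
    integral_add D4.int (d3.sq.cmul _).int, integral_add D3.int (dm0.sq.cmul _).int,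
    integral_add D2.int (d2.sq.cmul _).int, integral_add D1.int (c0.sq.cmul _).int,
    integral_add (dW.sq.cmul _).int (c1.sq.cmul _).int]
  simp only [integral_const_mul]
  have n1 := isq_nonneg (μ1 t)
  have n0 := isq_nonneg (μ0 t)
  have nl := isq_nonneg (l t)
  have g0 := abs_nonneg γ
  have hK : 0 ≤ K := (isq_nonneg _).trans k0
  rw [← inv_pow, ← inv_pow]
  have hH : h⁻¹ * h = 1 := inv_mul_cancel₀ h0.ne'
  have c1' : (∫ x, L h (dx μ1) t x ^ 2) ≤ h⁻¹ ^ 2 * ∫ x, μ1 t x ^ 2 := by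
    have := mul_le_mul_of_nonneg_left bm1 (sq_nonneg h⁻¹)
    rwa [← mul_assoc, ← mul_pow, hH, one_pow, one_mul] at this
  generalize h⁻¹ = H at *
  generalize (∫ x, μ1 t x ^ 2) = T1 at *
  generalize (∫ x, μ0 t x ^ 2) = T0 at *
  generalize (∫ x, l t x ^ 2) = Tl at *
  have p3 : H ^ 3 ≤ H ^ 5 := pow_le_pow_right₀ H1 (by norm_num)
  have p1 : H ≤ H ^ 5 := le_self_pow₀ H1 (by norm_num)
  have hHp : 0 ≤ H := by linarith
  have t1 : (2 * h) * (∫ x, W1 h f t x ^ 2) ≤ (2 * h) * (6 * K ^ 2) := by gcongr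
  have t2 : ((1 + |γ|) * H) * (∫ x, L h (dx μ1) t x ^ 2) ≤ (1 + |γ|) * (H ^ 5 * T1) := by
    calc _ ≤ ((1 + |γ|) * H) * (H ^ 2 * T1) := by gcongr
      _ = (1 + |γ|) * (H ^ 3 * T1) := by ring
      _ ≤ _ := by gcongr
  have t3 : ((1 + |γ|) * H) * (∫ x, L h μ0 t x ^ 2) ≤ (1 + |γ|) * (H ^ 5 * T0) := by
    calc _ ≤ ((1 + |γ|) * H ^ 5) * T0 := by gcongr
      _ = _ := by ring
  have t4 : h ^ 3 * (∫ x, L h (dx (dx f)) t x ^ 2) ≤ h * K := by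
    calc _ = h * (h ^ 2 * (∫ x, L h (dx (dx f)) t x ^ 2)) := by ring
      _ ≤ _ := by gcongr
  have t5 : H ^ 3 * T0 ≤ H ^ 5 * T0 := by gcongr
  have t6 : h ^ 5 * (∫ x, L h (dx (dx (dx f))) t x ^ 2) ≤ h * K := by
    calc _ = h * (h ^ 4 * (∫ x, L h (dx (dx (dx f))) t x ^ 2)) := by ring
      _ ≤ _ := by gcongr
  have t7 : 2 * |γ| * h * (∫ x, r t x ^ 2) ≤ 2 * |γ| * h * K := by gcongr
  have t8 : |γ| * h * (∫ x, L h f t x ^ 2) ≤ |γ| * h * K := by gcongr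
  have t9 : |γ| * H * Tl ≤ |γ| * H ^ 5 * Tl := by gcongr
  have u1 : 0 ≤ H ^ 5 * T1 := by positivity
  have u0 : 0 ≤ H ^ 5 * T0 := by positivity
  have ul : 0 ≤ H ^ 5 * Tl := by positivity
  have w1 := mul_nonneg g0 u1
  have w0 := mul_nonneg g0 u0
  have wl := mul_nonneg g0 ul
  have hX : 0 ≤ (12 * K ^ 2 + 2 * K + 3 * |γ| * K) * (H ^ 5 * (T1 + T0 + Tl)) := by positivity
  have hY : 0 ≤ (4 + 3 * |γ|) * h := by positivity
  nlinarith

end E1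
end SK
end

section
open MeasureTheory Filter Topology
open scoped ContDiff

namespace SK

section E2
variable (h : ℝ) (f g a b m m' n n' : ℝ → ℝ → ℝ)

noncomputable def e2 : ℝ → ℝ → ℝ := fun t x => L h (dx f) t x ^ 2 + L h (dx g) t x ^ 2
noncomputable def main2 : ℝ → ℝ → ℝ := fun t x =>
  2 * (L h (dx f) t x * L h (dx a) t x) - 2 * (L h (dx g) t x * L h (dx b) t x)
noncomputable def err2 : ℝ → ℝ → ℝ := fun t x =>
  2 * (L h (dx f) t x * L h (dx (dx m)) t x) - 2 * (L h (dx f) t x * L h (dx n) t x)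
  - 2 * (L h (dx g) t x * L h (dx (dx m')) t x) + 2 * (L h (dx g) t x * L h (dx n') t x)

variable {h f g a b m m' n n'}

lemma main2_dec (h0 : 0 < h) (h1 : h ≤ 1) (hf : CS f) (hg : CS g) (ha : CS a) (hb : CS b) :
    Dec (main2 h f g a b) :=
  (((L_dec h0 h1 hf.dx).mul (L_dec h0 h1 ha.dx)).cmul 2).sub
    (((L_dec h0 h1 hg.dx).mul (L_dec h0 h1 hb.dx)).cmul 2)
lemma err2_dec (h0 : 0 < h) (h1 : h ≤ 1) (hf : CS f) (hg : CS g) (hm : CS m) (hm' : CS m')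
    (hn : CS n) (hn' : CS n') : Dec (err2 h f g m m' n n') :=
  (((((L_dec h0 h1 hf.dx).mul (L_dec h0 h1 hm.dx.dx)).cmul 2).sub
    (((L_dec h0 h1 hf.dx).mul (L_dec h0 h1 hn.dx)).cmul 2)).sub
    (((L_dec h0 h1 hg.dx).mul (L_dec h0 h1 hm'.dx.dx)).cmul 2)).add
    (((L_dec h0 h1 hg.dx).mul (L_dec h0 h1 hn'.dx)).cmul 2)

lemma Sm.dx_add {f g : ℝ → ℝ → ℝ} (hf : Sm f) (hg : Sm g) :
    SK.dx (fun t x => f t x + g t x) = fun t x => SK.dx f t x + SK.dx g t x := by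
  funext t x; exact ((hf.hx t x).add (hg.hx t x)).deriv
lemma Sm.dx_sub {f g : ℝ → ℝ → ℝ} (hf : Sm f) (hg : Sm g) :
    SK.dx (fun t x => f t x - g t x) = fun t x => SK.dx f t x - SK.dx g t x := by
  funext t x; exact ((hf.hx t x).sub (hg.hx t x)).deriv
lemma Sm.dx_mul {f g : ℝ → ℝ → ℝ} (hf : Sm f) (hg : Sm g) :
    SK.dx (fun t x => f t x * g t x) = fun t x => SK.dx f t x * g t x + f t x * SK.dx g t x := by
  funext t x; exact ((hf.hx t x).mul (hg.hx t x)).deriv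
lemma Sm.dx_cmul {f : ℝ → ℝ → ℝ} (c : ℝ) (hf : Sm f) :
    SK.dx (fun t x => c * f t x) = fun t x => c * SK.dx f t x := by
  funext t x; exact ((hf.hx t x).const_mul c).deriv
lemma Sm.dt_mul {f g : ℝ → ℝ → ℝ} (hf : Sm f) (hg : Sm g) :
    SK.dt (fun t x => f t x * g t x) = fun t x => SK.dt f t x * g t x + f t x * SK.dt g t x := by
  funext t x; exact ((hf.ht t x).mul (hg.ht t x)).deriv

lemma L_lin4 {c1 c2 c3 c4 : ℝ} {A B C' E : ℝ → ℝ → ℝ} (hA : CS A) (hB : CS B) (hC : CS C')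
    (hE : CS E) (t x : ℝ) :
    L h (dx (fun t x => (c1 * A t x + c2 * B t x) + (c3 * C' t x + c4 * E t x))) t x =
      c1 * L h (dx A) t x + c2 * L h (dx B) t x + (c3 * L h (dx C') t x + c4 * L h (dx E) t x) := by
  have : dx (fun t x => (c1 * A t x + c2 * B t x) + (c3 * C' t x + c4 * E t x)) =
      fun t x => (c1 * dx A t x + c2 * dx B t x) + (c3 * dx C' t x + c4 * dx E t x) := by
    funext t x
    exact ((((hA.1.hx t x).const_mul c1).add ((hB.1.hx t x).const_mul c2)).add
      (((hC.1.hx t x).const_mul c3).add ((hE.1.hx t x).const_mul c4))).deriv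
  rw [this, L_add ((hA.dx.cmul _).add (hB.dx.cmul _)) ((hC.dx.cmul _).add (hE.dx.cmul _)),
    L_add (hA.dx.cmul _) (hB.dx.cmul _), L_add (hC.dx.cmul _) (hE.dx.cmul _)]
  simp only [L_cmul]

lemma e2_bal (h0 : 0 < h) (h1 : h ≤ 1) (hf : CS f) (hg : CS g) (ha : CS a) (hb : CS b)
    (hm : CS m) (hm' : CS m') (hn : CS n) (hn' : CS n')
    (ef : ∀ t x, dt f t x = - dx (dx g) t x + a t x + dx m t x - n t x)
    (eg : ∀ t x, dt g t x = dx (dx f) t x - b t x - dx m' t x + n' t x) (s s' : ℝ) :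
    (∫ x, e2 h f g s' x) - (∫ x, e2 h f g s x) =
      ∫ t in s..s', ∫ x, (main2 h f g a b t x + err2 h f g m m' n n' t x) := by
  have f1 := L_dec h0 h1 hf.dx
  have g1 := L_dec h0 h1 hg.dx
  have f2 := L_dec h0 h1 hf.dx.dx
  have g2 := L_dec h0 h1 hg.dx.dx
  have y1 := L_dec h0 h1 hf.dt.dx
  have y2 := L_dec h0 h1 hg.dt.dx
  refine balance (e := e2 h f g) (et := fun t x => 2 * (L h (dx f) t x * L h (dx (dt f)) t x)
      + 2 * (L h (dx g) t x * L h (dx (dt g)) t x))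
    (F := fun t x => 2 * (L h (dx g) t x * L h (dx (dx f)) t x)
      - 2 * (L h (dx f) t x * L h (dx (dx g)) t x)) (f1.sq.add g1.sq)
    (((f1.mul y1).cmul 2).add ((g1.mul y2).cmul 2))
    (((g1.mul f2).cmul 2).sub ((f1.mul g2).cmul 2))
    ((main2_dec h0 h1 hf hg ha hb).add (err2_dec h0 h1 hf hg hm hm' hn hn')) ?_ ?_ s s'
  · intro t x
    have k1 := L_ht (h := h) hf.dx t x
    have k2 := L_ht (h := h) hg.dx t x
    rw [hf.1.comm] at k1
    rw [hg.1.comm] at k2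
    refine ((k1.pow 2).add (k2.pow 2)).congr_deriv ?_
    push_cast; ring
  · intro t x
    have k1 := L_hx (h := h) hf.dx t x
    have k2 := L_hx (h := h) hf.dx.dx t x
    have l1 := L_hx (h := h) hg.dx t x
    have l2 := L_hx (h := h) hg.dx.dx t x
    refine (((l1.mul k2).const_mul 2).sub ((k1.mul l2).const_mul 2)).congr_deriv ?_
    have E1 : dt f = fun t x => (-1 * dx (dx g) t x + 1 * a t x) + (1 * dx m t x + (-1) * n t x) := by
      funext t x; rw [ef]; ring
    have E2 : dt g = fun t x => (1 * dx (dx f) t x + (-1) * b t x) + ((-1) * dx m' t x + 1 * n' t x) := by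
      funext t x; rw [eg]; ring
    rw [E1, E2, L_lin4 hg.dx.dx ha hm.dx hn, L_lin4 hf.dx.dx hb hm'.dx hn']
    unfold main2 err2
    ring

lemma main2_bd {K : ℝ} (h0 : 0 < h) (h1 : h ≤ 1) (hf : CS f) (hg : CS g) (ha : CS a) (hb : CS b)
    (t : ℝ) (k1 : ∫ x, dx f t x ^ 2 ≤ K) (k2 : ∫ x, dx g t x ^ 2 ≤ K)
    (k3 : ∫ x, dx a t x ^ 2 ≤ K) (k4 : ∫ x, dx b t x ^ 2 ≤ K) :
    |∫ x, main2 h f g a b t x| ≤ 8 * K := by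
  have df := (L_dec h0 h1 hf.dx).D t
  have dg := (L_dec h0 h1 hg.dx).D t
  have da := (L_dec h0 h1 ha.dx).D t
  have db := (L_dec h0 h1 hb.dx).D t
  have bf := (L_sq0 h0 h1 hf.dx t).trans k1
  have bg := (L_sq0 h0 h1 hg.dx t).trans k2
  have ba := (L_sq0 h0 h1 ha.dx t).trans k3
  have bb := (L_sq0 h0 h1 hb.dx t).trans k4
  have hp : ∀ x, ‖main2 h f g a b t x‖ ≤ 2 * ((L h (dx f) t x ^ 2 + L h (dx a) t x ^ 2) +
      (L h (dx g) t x ^ 2 + L h (dx b) t x ^ 2)) := by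
    intro x
    have y1 := young (a := L h (dx f) t x) (b := L h (dx a) t x) one_pos
    have y2 := young (a := L h (dx g) t x) (b := L h (dx b) t x) one_pos
    simp only [inv_one, one_mul] at y1 y2
    rw [Real.norm_eq_abs]; unfold main2
    refine (abs_sub _ _).trans ?_
    rw [abs_mul 2, abs_mul 2, abs_two]
    linarith
  refine (norm_integral_le_of_norm_le (((df.sq.add da.sq).add (dg.sq.add db.sq)).cmul 2).int
        (Eventually.of_forall hp)).trans ?_
  rw [integral_const_mul, integral_add (df.sq.add da.sq).int (dg.sq.add db.sq).int,
    integral_add df.sq.int da.sq.int, integral_add dg.sq.int db.sq.int]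
  linarith

lemma err2_bd {K : ℝ} (h0 : 0 < h) (h1 : h ≤ 1) (hf : CS f) (hg : CS g)
    (hm : CS m) (hm' : CS m') (hn : CS n) (hn' : CS n')
    (t : ℝ) (k1 : ∫ x, dx f t x ^ 2 ≤ K) (k2 : ∫ x, dx g t x ^ 2 ≤ K) :
    |∫ x, err2 h f g m m' n n' t x| ≤ (8 * K + 2) *
      (h + h⁻¹ ^ 5 * ∫ x, ((m t x ^ 2 + m' t x ^ 2) + (dx n t x ^ 2 + dx n' t x ^ 2))) := by
  have df := (L_dec h0 h1 hf.dx).D t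
  have dg := (L_dec h0 h1 hg.dx).D t
  have dm := (L_dec h0 h1 hm.dx.dx).D t
  have dm' := (L_dec h0 h1 hm'.dx.dx).D t
  have dn := (L_dec h0 h1 hn.dx).D t
  have dn' := (L_dec h0 h1 hn'.dx).D t
  have cm := hm.dec.D t
  have cm' := hm'.dec.D t
  have cn := hn.dx.dec.D t
  have cn' := hn'.dx.dec.D t
  have bf := (L_sq0 h0 h1 hf.dx t).trans k1
  have bg := (L_sq0 h0 h1 hg.dx t).trans k2
  have bm := L_sq2 h0 h1 hm t
  have bm' := L_sq2 h0 h1 hm' t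
  have bn := L_sq0 h0 h1 hn.dx t
  have bn' := L_sq0 h0 h1 hn'.dx t
  rw [integral_add (cm.sq.add cm'.sq).int (cn.sq.add cn'.sq).int, integral_add cm.sq.int cm'.sq.int,
    integral_add cn.sq.int cn'.sq.int]
  have H1 : 1 ≤ h⁻¹ := (one_le_inv₀ h0).2 h1
  have hp : ∀ x, ‖err2 h f g m m' n n' t x‖ ≤
      4 * h * (L h (dx f) t x ^ 2 + L h (dx g) t x ^ 2) +
      2 * h⁻¹ * ((L h (dx (dx m)) t x ^ 2 + L h (dx (dx m')) t x ^ 2) +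
        (L h (dx n) t x ^ 2 + L h (dx n') t x ^ 2)) := by
    intro x
    have y1 := young (a := L h (dx f) t x) (b := L h (dx (dx m)) t x) h0
    have y2 := young (a := L h (dx f) t x) (b := L h (dx n) t x) h0
    have y3 := young (a := L h (dx g) t x) (b := L h (dx (dx m')) t x) h0
    have y4 := young (a := L h (dx g) t x) (b := L h (dx n') t x) h0
    rw [Real.norm_eq_abs]; unfold err2
    refine ((abs_add_le _ _).trans (add_le_add ((abs_sub _ _).trans (add_le_add
      (abs_sub _ _) le_rfl)) le_rfl)).trans ?_
    simp only [abs_mul (2 : ℝ), abs_two]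
    linarith
  refine (norm_integral_le_of_norm_le (((df.sq.add dg.sq).cmul _).add
      (((dm.sq.add dm'.sq).add (dn.sq.add dn'.sq)).cmul _)).int
        (Eventually.of_forall hp)).trans ?_
  rw [integral_add ((df.sq.add dg.sq).cmul _).int
      (((dm.sq.add dm'.sq).add (dn.sq.add dn'.sq)).cmul _).int, integral_const_mul,
    integral_const_mul, integral_add df.sq.int dg.sq.int,
    integral_add (dm.sq.add dm'.sq).int (dn.sq.add dn'.sq).int, integral_add dm.sq.int dm'.sq.int,
    integral_add dn.sq.int dn'.sq.int]
  have p1 := isq_nonneg (m t)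
  have p2 := isq_nonneg (m' t)
  have p3 := isq_nonneg (dx n t)
  have p4 := isq_nonneg (dx n' t)
  have hK : 0 ≤ K := (isq_nonneg _).trans k1
  have hH : h⁻¹ * h = 1 := inv_mul_cancel₀ h0.ne'
  have q1 : (∫ x, L h (dx (dx m)) t x ^ 2) ≤ h⁻¹ ^ 4 * ∫ x, m t x ^ 2 := by
    have := mul_le_mul_of_nonneg_left bm (pow_nonneg (zero_le_one.trans H1) 4)
    rwa [← mul_assoc, ← mul_pow, hH, one_pow, one_mul] at this
  have q2 : (∫ x, L h (dx (dx m')) t x ^ 2) ≤ h⁻¹ ^ 4 * ∫ x, m' t x ^ 2 := by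
    have := mul_le_mul_of_nonneg_left bm' (pow_nonneg (zero_le_one.trans H1) 4)
    rwa [← mul_assoc, ← mul_pow, hH, one_pow, one_mul] at this
  generalize h⁻¹ = H at *
  generalize (∫ x, m t x ^ 2) = T1 at *
  generalize (∫ x, m' t x ^ 2) = T2 at *
  generalize (∫ x, dx n t x ^ 2) = T3 at *
  generalize (∫ x, dx n' t x ^ 2) = T4 at *
  have e1 : H ≤ H ^ 5 := le_self_pow₀ H1 (by norm_num)
  have hHp : 0 ≤ H := by linarith
  calc _ ≤ 4 * h * (K + K) + 2 * H * ((H ^ 4 * T1 + H ^ 4 * T2) + (T3 + T4)) := by gcongr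
    _ = 8 * K * h + 2 * (H ^ 5 * (T1 + T2) + H * (T3 + T4)) := by ring
    _ ≤ 8 * K * h + 2 * (H ^ 5 * (T1 + T2) + H ^ 5 * (T3 + T4)) := by gcongr
    _ ≤ _ := by
      have : 0 ≤ 8 * K * (H ^ 5 * (T1 + T2 + (T3 + T4))) := by positivity
      nlinarith
end E2
end SK
end

section
open MeasureTheory Filter Topology
open scoped ContDiff

namespace SK

noncomputable def hh (n : ℕ) : ℝ := 1 / ((n : ℝ) + 1)
lemma hh_pos (n : ℕ) : 0 < hh n := by unfold hh; positivity
lemma hh_le (n : ℕ) : hh n ≤ 1 := by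
  unfold hh; rw [div_le_one (by positivity)]; simp
lemma hh_lim : Tendsto hh atTop (𝓝 0) := tendsto_one_div_add_atTop_nhds_zero_nat

lemma diag {E M S : ℕ → ℕ → ℝ → ℝ} {θ : ℕ → ℝ → ℝ} {Lim Einf : ℝ → ℝ} {C K a b : ℝ}
    (hab : a ≤ b)
    (bal : ∀ n N, E n N b - E n N a = ∫ t in a..b, S n N t)
    (Sc : ∀ n N, Continuous (S n N)) (Mc : ∀ n N, Continuous (M n N))
    (err : ∀ n N t, |S n N t - M n N t| ≤ C * (hh n + (hh n)⁻¹ ^ 5 * θ N t))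
    (Mb : ∀ n N t, |M n N t| ≤ K)
    (θc : ∀ N, Continuous (θ N)) (θn : ∀ N t, 0 ≤ θ N t) (θb : ∀ N t, θ N t ≤ K)
    (θ0 : ∀ t, Tendsto (fun N => θ N t) atTop (𝓝 0))
    (lim : ∀ k : ℕ → ℕ, Tendsto k atTop atTop →
      ∀ t, Tendsto (fun n => M n (k n) t) atTop (𝓝 (Lim t)))
    (limE : ∀ k : ℕ → ℕ, Tendsto k atTop atTop →
      ∀ t, Tendsto (fun n => E n (k n) t) atTop (𝓝 (Einf t))) :
    IntervalIntegrable Lim volume a b ∧ Einf b - Einf a = ∫ t in a..b, Lim t := by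
  have T : Tendsto (fun N => ∫ t in a..b, θ N t) atTop (𝓝 0) := by
    have := intervalIntegral.tendsto_integral_filter_of_dominated_convergence (μ := volume)
      (a := a) (b := b) (F := θ) (f := fun _ => 0) (l := atTop) (fun _ => K)
      (Eventually.of_forall fun N => (θc N).aestronglyMeasurable)
      (Eventually.of_forall fun N => Eventually.of_forall fun t _ => by
        rw [Real.norm_eq_abs, abs_of_nonneg (θn N t)]; exact θb N t)
      intervalIntegrable_const (Eventually.of_forall fun t _ => θ0 t)
    simpa using this
  have hk : ∀ n, ∃ N, n ≤ N ∧ (hh n)⁻¹ ^ 5 * ∫ t in a..b, θ N t ≤ hh n := by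
    intro n
    have T' : Tendsto (fun N => (hh n)⁻¹ ^ 5 * ∫ t in a..b, θ N t) atTop (𝓝 0) := by
      have := T.const_mul ((hh n)⁻¹ ^ 5)
      rwa [mul_zero] at this
    obtain ⟨N, h1, h2⟩ := ((T'.eventually (ge_mem_nhds (hh_pos n))).and
      (eventually_ge_atTop n)).exists
    exact ⟨N, h2, h1⟩
  choose k hk1 hk2 using hk
  have hkt : Tendsto k atTop atTop := tendsto_atTop_mono hk1 tendsto_id
  have hL : IntervalIntegrable Lim volume a b := by
    rw [intervalIntegrable_iff]
    have hm : AEStronglyMeasurable Lim (volume.restrict (Set.uIoc a b)) :=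
      aestronglyMeasurable_of_tendsto_ae atTop
        (fun n => (Mc n (k n)).aestronglyMeasurable) (Eventually.of_forall (lim k hkt))
    have hc : IntegrableOn (fun _ : ℝ => K) (Set.uIoc a b) :=
      intervalIntegrable_iff.1 intervalIntegrable_const
    refine hc.mono' hm (Eventually.of_forall fun t => ?_)
    exact le_of_tendsto (lim k hkt t).norm (Eventually.of_forall fun n => Mb n (k n) t)
  refine ⟨hL, ?_⟩
  have I1 : Tendsto (fun n => ∫ t in a..b, M n (k n) t) atTop (𝓝 (∫ t in a..b, Lim t)) :=
    intervalIntegral.tendsto_integral_filter_of_dominated_convergence (fun _ => K)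
      (Eventually.of_forall fun n => (Mc n (k n)).aestronglyMeasurable)
      (Eventually.of_forall fun n => Eventually.of_forall fun t _ => Mb n (k n) t)
      intervalIntegrable_const (Eventually.of_forall fun t _ => lim k hkt t)
  have I2 : Tendsto (fun n => ∫ t in a..b, (S n (k n) t - M n (k n) t)) atTop (𝓝 0) := by
    have hb : Tendsto (fun n => |C| * ((b - a) * hh n + hh n)) atTop (𝓝 0) := by
      simpa using ((hh_lim.const_mul (b - a)).add hh_lim).const_mul |C|
    refine squeeze_zero_norm (fun n => ?_) hb
    have i1 : IntervalIntegrable (fun t => |C| * (hh n + (hh n)⁻¹ ^ 5 * θ (k n) t)) volume a b :=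
      Continuous.intervalIntegrable (by have := θc (k n); fun_prop) _ _
    refine (intervalIntegral.norm_integral_le_of_norm_le hab (Eventually.of_forall
      fun t _ => (err n (k n) t).trans ?_) i1).trans ?_
    · have := θn (k n) t
      have := hh_pos n
      gcongr
      exact le_abs_self C
    · rw [intervalIntegral.integral_const_mul, intervalIntegral.integral_add
        intervalIntegrable_const (Continuous.intervalIntegrable (by have := θc (k n); fun_prop) _ _),
        intervalIntegral.integral_const_mul, intervalIntegral.integral_const, smul_eq_mul]
      have := hk2 n
      gcongr
  have I3 : Tendsto (fun n => E n (k n) b - E n (k n) a) atTop (𝓝 (∫ t in a..b, Lim t)) := by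
    have := I1.add I2
    rw [add_zero] at this
    refine this.congr fun n => ?_
    rw [bal, intervalIntegral.integral_sub ((Sc _ _).intervalIntegrable _ _)
      ((Mc _ _).intervalIntegrable _ _)]
    ring
  exact tendsto_nhds_unique ((limE k hkt b).sub (limE k hkt a)) I3

/-! cutoff -/
lemma exists_chi : ∃ c : ℝ → ℝ, ContDiff ℝ ∞ c ∧ (∀ x, 2 < |x| → c x = 0) ∧
    (∀ x, |x| < 1 → c x = 1) ∧ ∀ x, |c x| ≤ 1 := by
  let c : ContDiffBump (0 : ℝ) := ⟨1, 2, by norm_num, by norm_num⟩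
  refine ⟨c, c.contDiff, fun x hx => c.zero_of_le_dist ?_, fun x hx => c.one_of_mem_closedBall ?_,
    fun x => ?_⟩
  · simp only [dist_zero_right, Real.norm_eq_abs]; exact hx.le
  · simp only [mem_closedBall_zero_iff, Real.norm_eq_abs]; exact hx.le
  · rw [abs_of_nonneg c.nonneg]; exact c.le_one

noncomputable def chi : ℝ → ℝ := exists_chi.choose
noncomputable def Ph (N k : ℕ) : ℝ → ℝ → ℝ := fun _ x => hh N ^ k * iteratedDeriv k chi (hh N * x)

lemma chi_cd : ContDiff ℝ ∞ chi := exists_chi.choose_spec.1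
lemma chi_zero : ∀ x, 2 < |x| → chi x = 0 := exists_chi.choose_spec.2.1
lemma chi_one : ∀ x, |x| < 1 → chi x = 1 := exists_chi.choose_spec.2.2.1
lemma chi_le : ∀ x, |chi x| ≤ 1 := exists_chi.choose_spec.2.2.2

lemma chi_icd (k : ℕ) : ContDiff ℝ ∞ (iteratedDeriv k chi) := by
  rw [iteratedDeriv_eq_iterate]
  exact chi_cd.iterate_deriv k

lemma chi_zero_k (k : ℕ) : ∀ x, 2 < |x| → iteratedDeriv k chi x = 0 := by
  induction k with
  | zero => simpa using chi_zero
  | succ k ih =>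
    intro x hx
    have : iteratedDeriv k chi =ᶠ[𝓝 x] fun _ => 0 := by
      filter_upwards [(isOpen_lt continuous_const continuous_abs).mem_nhds hx] with y hy
      exact ih y hy
    rw [iteratedDeriv_succ, this.deriv_eq, deriv_const]

lemma chi_const_k (k : ℕ) : ∀ x, |x| < 1 → iteratedDeriv (k + 1) chi x = 0 := by
  induction k with
  | zero =>
    intro x hx
    have : chi =ᶠ[𝓝 x] fun _ => 1 := by
      filter_upwards [(isOpen_lt continuous_abs continuous_const).mem_nhds hx] with y hy
      exact chi_one y hy
    rw [iteratedDeriv_one, this.deriv_eq, deriv_const]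
  | succ k ih =>
    intro x hx
    have : iteratedDeriv (k + 1) chi =ᶠ[𝓝 x] fun _ => 0 := by
      filter_upwards [(isOpen_lt continuous_abs continuous_const).mem_nhds hx] with y hy
      exact ih y hy
    rw [iteratedDeriv_succ, this.deriv_eq, deriv_const]

lemma Ph_cs (N k : ℕ) : CS (Ph N k) := by
  refine ⟨?_, 2 / hh N, fun t x hx => ?_⟩
  · unfold Sm Ph
    have := chi_icd k
    fun_prop
  · unfold Ph
    rw [chi_zero_k k _ _, mul_zero]
    rw [abs_mul, abs_of_pos (hh_pos N), ← div_lt_iff₀' (hh_pos N)]; exact hx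

lemma Ph_dx (N k : ℕ) : dx (Ph N k) = Ph N (k + 1) := by
  funext t x
  have h1 : HasDerivAt (iteratedDeriv k chi) (iteratedDeriv (k + 1) chi (hh N * x)) (hh N * x) := by
    rw [iteratedDeriv_succ]
    exact ((chi_icd k).differentiable (by simp) _).hasDerivAt
  have h2 : HasDerivAt (fun x : ℝ => hh N * x) (hh N) x := by
    simpa using (hasDerivAt_id x).const_mul (hh N)
  refine ((h1.comp x h2).const_mul (hh N ^ k)).deriv.trans ?_
  unfold Ph; ring

lemma Ph_dt (N k : ℕ) : dt (Ph N k) = fun _ _ => 0 := by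
  funext t x; unfold dt Ph; simp

lemma Ph_bd (k : ℕ) : ∃ C, ∀ N t x, |Ph N k t x| ≤ C := by
  have hc : Continuous (iteratedDeriv k chi) := (chi_icd k).continuous
  obtain ⟨C, hC⟩ := (isCompact_Icc (a := (-2 : ℝ)) (b := 2)).exists_bound_of_continuousOn hc.continuousOn
  refine ⟨max C 0, fun N t x => ?_⟩
  unfold Ph
  rw [abs_mul, abs_of_pos (pow_pos (hh_pos N) k)]
  have h1 : |iteratedDeriv k chi (hh N * x)| ≤ max C 0 := by
    by_cases hx : 2 < |hh N * x|
    · rw [chi_zero_k k _ hx, abs_zero]; exact le_max_right _ _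
    · push Not at hx
      exact (hC _ (abs_le.1 hx)).trans (le_max_left _ _)
  calc _ ≤ 1 * |iteratedDeriv k chi (hh N * x)| :=
        mul_le_mul_of_nonneg_right (pow_le_one₀ (hh_pos N).le (hh_le N)) (abs_nonneg _)
    _ ≤ _ := by linarith

lemma Ph_ev (x : ℝ) : ∀ᶠ N in atTop, |hh N * x| < 1 := by
  have : Tendsto (fun N => |hh N * x|) atTop (𝓝 0) := by
    simpa using (hh_lim.mul_const x).abs
  exact this.eventually (gt_mem_nhds one_pos)

lemma Ph_lim0 (t x : ℝ) : Tendsto (fun N => Ph N 0 t x) atTop (𝓝 1) := by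
  refine tendsto_const_nhds.congr' ?_
  filter_upwards [Ph_ev x] with N hN
  simp [Ph, chi_one _ hN]
lemma Ph_lim (k : ℕ) (t x : ℝ) : Tendsto (fun N => Ph N (k + 1) t x) atTop (𝓝 0) := by
  refine tendsto_const_nhds.congr' ?_
  filter_upwards [Ph_ev x] with N hN
  simp [Ph, chi_const_k k _ hN]

/-! convergence with domination -/
def Cv (g : ℕ → ℝ → ℝ) (l : ℝ → ℝ) : Prop :=
  (∀ n, Continuous (g n)) ∧ (∃ C, ∀ n x, |g n x| ≤ C * wt x) ∧
    ∀ x, Tendsto (fun n => g n x) atTop (𝓝 (l x))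

lemma Cv.int {g : ℕ → ℝ → ℝ} {l : ℝ → ℝ} (h : Cv g l) :
    Tendsto (fun n => ∫ x, g n x) atTop (𝓝 (∫ x, l x)) := by
  obtain ⟨h1, ⟨C, hC⟩, h2⟩ := h
  exact tendsto_integral_of_dominated_convergence (fun x => C * wt x)
    (fun n => (h1 n).aestronglyMeasurable) (wt_int.const_mul C)
    (fun n => Eventually.of_forall (hC n)) (Eventually.of_forall h2)
lemma Cv.add {g g' : ℕ → ℝ → ℝ} {l l' : ℝ → ℝ} (h : Cv g l) (h' : Cv g' l') :
    Cv (fun n x => g n x + g' n x) (fun x => l x + l' x) := by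
  obtain ⟨h1, ⟨C, hC⟩, h2⟩ := h
  obtain ⟨h1', ⟨C', hC'⟩, h2'⟩ := h'
  refine ⟨fun n => (h1 n).add (h1' n), ⟨C + C', fun n x => ?_⟩, fun x => (h2 x).add (h2' x)⟩
  calc _ ≤ |g n x| + |g' n x| := abs_add_le _ _
    _ ≤ _ := by linarith [hC n x, hC' n x]
lemma Cv.mul {g g' : ℕ → ℝ → ℝ} {l l' : ℝ → ℝ} (h : Cv g l) (h' : Cv g' l') :
    Cv (fun n x => g n x * g' n x) (fun x => l x * l' x) := by
  obtain ⟨h1, ⟨C, hC⟩, h2⟩ := h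
  obtain ⟨h1', ⟨C', hC'⟩, h2'⟩ := h'
  exact ⟨fun n => (h1 n).mul (h1' n), ⟨C * C', fun n x =>
    mul_bd (wt_pos x).le (wt_le x) (hC n x) (hC' n x)⟩, fun x => (h2 x).mul (h2' x)⟩
/-- multiplication by bounded convergent numerical or functional factors -/
lemma Cv.bmul {g g' : ℕ → ℝ → ℝ} {l l' : ℝ → ℝ} (c : ∀ n, Continuous (g n))
    {B : ℝ} (hB : ∀ n x, |g n x| ≤ B) (hl : ∀ x, Tendsto (fun n => g n x) atTop (𝓝 (l x)))
    (h' : Cv g' l') : Cv (fun n x => g n x * g' n x) (fun x => l x * l' x) := by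
  obtain ⟨h1', ⟨C', hC'⟩, h2'⟩ := h'
  refine ⟨fun n => (c n).mul (h1' n), ⟨B * C', fun n x => ?_⟩, fun x => (hl x).mul (h2' x)⟩
  rw [abs_mul, mul_assoc]
  exact mul_le_mul (hB n x) (hC' n x) (abs_nonneg _) ((abs_nonneg _).trans (hB n x))
lemma Cv.cmul {g : ℕ → ℝ → ℝ} {l : ℝ → ℝ} (c : ℝ) (h : Cv g l) :
    Cv (fun n x => c * g n x) (fun x => c * l x) :=
  Cv.bmul (g := fun _ _ => c) (l := fun _ => c) (fun _ => continuous_const)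
    (fun _ _ => le_rfl) (fun _ => tendsto_const_nhds) h
lemma Cv.neg {g : ℕ → ℝ → ℝ} {l : ℝ → ℝ} (h : Cv g l) :
    Cv (fun n x => - g n x) (fun x => - l x) := by simpa using h.cmul (-1)
lemma Cv.sub {g g' : ℕ → ℝ → ℝ} {l l' : ℝ → ℝ} (h : Cv g l) (h' : Cv g' l') :
    Cv (fun n x => g n x - g' n x) (fun x => l x - l' x) := by
  simpa [sub_eq_add_neg] using h.add h'.neg
lemma Cv.sq {g : ℕ → ℝ → ℝ} {l : ℝ → ℝ} (h : Cv g l) :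
    Cv (fun n x => g n x ^ 2) (fun x => l x ^ 2) := by simpa [pow_two] using h.mul h
lemma Cv.cube {g : ℕ → ℝ → ℝ} {l : ℝ → ℝ} (h : Cv g l) :
    Cv (fun n x => g n x ^ 3) (fun x => l x ^ 3) := by simpa [pow_succ] using (h.mul h).mul h
lemma Cv.const {g : ℝ → ℝ} (h : D g) : Cv (fun _ => g) g :=
  ⟨fun _ => h.1, h.2.imp fun _ hC _ => hC, fun _ => tendsto_const_nhds⟩
lemma Cv.eps {g : ℕ → ℝ → ℝ} {l : ℝ → ℝ} (h : Cv g l) :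
    Cv (fun n x => hh n ^ 2 * g n x) (fun _ => 0) := by
  have := Cv.bmul (g := fun n _ => hh n ^ 2) (l := fun _ => 0) (B := 1) (fun n => continuous_const)
    (fun n _ => by rw [abs_of_nonneg (sq_nonneg _)]; exact pow_le_one₀ (hh_pos n).le (hh_le n))
    (fun _ => by simpa using hh_lim.pow 2) h
  simpa using this
lemma Cv.ph0 {k : ℕ → ℕ} (hk : Tendsto k atTop atTop) (t : ℝ) {g : ℕ → ℝ → ℝ} {l : ℝ → ℝ}
    (h : Cv g l) : Cv (fun n x => Ph (k n) 0 t x * g n x) l := by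
  obtain ⟨B, hB⟩ := Ph_bd 0
  have := Cv.bmul (g := fun n x => Ph (k n) 0 t x) (l := fun _ => 1) (B := B)
    (fun n => ((Ph_cs (k n) 0).dec.D t).1)
    (fun n x => hB _ t x) (fun x => (Ph_lim0 t x).comp hk) h
  simpa using this
lemma Cv.phk {k : ℕ → ℕ} (hk : Tendsto k atTop atTop) (t : ℝ) (m : ℕ) {g : ℕ → ℝ → ℝ} {l : ℝ → ℝ}
    (h : Cv g l) : Cv (fun n x => Ph (k n) (m + 1) t x * g n x) (fun _ => 0) := by
  obtain ⟨B, hB⟩ := Ph_bd (m + 1)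
  have := Cv.bmul (g := fun n x => Ph (k n) (m + 1) t x) (l := fun _ => 0) (B := B)
    (fun n => ((Ph_cs (k n) (m + 1)).dec.D t).1)
    (fun n x => hB _ t x) (fun x => (Ph_lim m t x).comp hk) h
  simpa using this
lemma Cv.congr {g g' : ℕ → ℝ → ℝ} {l l' : ℝ → ℝ} (h : Cv g l) (e : ∀ n x, g' n x = g n x)
    (e' : ∀ x, l' x = l x) : Cv g' l' := by
  have a : g' = g := by funext n x; exact e n x
  have b : l' = l := by funext x; exact e' x
  rw [a, b]; exact h

/-! uniform derivative bounds at a fixed time -/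
def UB (w : ℝ → ℝ) (t : ℝ) : ℕ → (ℕ → ℝ → ℝ → ℝ) → Prop
  | 0, F => ∃ C, ∀ n x, |F n t x| ≤ C * w x
  | m + 1, F => (∃ C, ∀ n x, |F n t x| ≤ C * w x) ∧ UB w t m (fun n => dx (F n))

lemma UB.bd {w : ℝ → ℝ} {t : ℝ} {m : ℕ} {F : ℕ → ℝ → ℝ → ℝ} (h : UB w t m F) :
    ∃ C, ∀ n x, |F n t x| ≤ C * w x := by
  cases m with
  | zero => exact h
  | succ m => exact h.1
lemma UB.pred {w : ℝ → ℝ} {t : ℝ} {m : ℕ} : ∀ {F : ℕ → ℝ → ℝ → ℝ}, UB w t (m + 1) F → UB w t m F := by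
  induction m with
  | zero => intro F h; exact h.1
  | succ m ih => intro F h; exact ⟨h.1, ih h.2⟩
lemma UB.dx {w : ℝ → ℝ} {t : ℝ} {m : ℕ} {F : ℕ → ℝ → ℝ → ℝ} (h : UB w t (m + 1) F) :
    UB w t m (fun n => SK.dx (F n)) := h.2

lemma bd_add {w : ℝ → ℝ} {t : ℝ} {F G : ℕ → ℝ → ℝ → ℝ}
    (hF : ∃ C, ∀ n x, |F n t x| ≤ C * w x) (hG : ∃ C, ∀ n x, |G n t x| ≤ C * w x) :
    ∃ C, ∀ n x, |(fun n t x => F n t x + G n t x) n t x| ≤ C * w x := by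
  obtain ⟨A, hA⟩ := hF
  obtain ⟨B, hB⟩ := hG
  refine ⟨A + B, fun n x => ?_⟩
  calc _ ≤ |F n t x| + |G n t x| := abs_add_le _ _
    _ ≤ _ := by linarith [hA n x, hB n x]

lemma UB.add {w : ℝ → ℝ} {t : ℝ} {m : ℕ} : ∀ {F G : ℕ → ℝ → ℝ → ℝ}, (∀ n, Sm (F n)) →
    (∀ n, Sm (G n)) → UB w t m F → UB w t m G → UB w t m (fun n t x => F n t x + G n t x) := by
  induction m with
  | zero => intro F G _ _ hF hG; exact bd_add hF hG
  | succ m ih =>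
    intro F G sF sG hF hG
    refine ⟨bd_add hF.1 hG.1, ?_⟩
    simp only [(sF _).dx_add (sG _)]
    exact ih (fun n => (sF n).dx) (fun n => (sG n).dx) hF.2 hG.2

lemma bd_mul {w w' : ℝ → ℝ} (hw : ∀ x, 0 ≤ w x) (hw' : ∀ x, 0 ≤ w' x ∧ w' x ≤ 1)
    {t : ℝ} {F G : ℕ → ℝ → ℝ → ℝ}
    (hF : ∃ C, ∀ n x, |F n t x| ≤ C * w' x) (hG : ∃ C, ∀ n x, |G n t x| ≤ C * w x) :
    ∃ C, ∀ n x, |(fun n t x => F n t x * G n t x) n t x| ≤ C * w x := by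
  obtain ⟨A, hA⟩ := hF
  obtain ⟨B, hB⟩ := hG
  refine ⟨|A| * B, fun n x => ?_⟩
  simp only [abs_mul, mul_assoc]
  refine mul_le_mul ((hA n x).trans ?_) (hB n x) (abs_nonneg _) (abs_nonneg _)
  calc _ ≤ |A| * 1 := mul_le_mul (le_abs_self A) (hw' x).2 (hw' x).1 (abs_nonneg _)
    _ = _ := mul_one _

lemma UB.mul {w w' : ℝ → ℝ} (hw : ∀ x, 0 ≤ w x) (hw' : ∀ x, 0 ≤ w' x ∧ w' x ≤ 1)
    {t : ℝ} {m : ℕ} : ∀ {F G : ℕ → ℝ → ℝ → ℝ}, (∀ n, Sm (F n)) →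
    (∀ n, Sm (G n)) → UB w' t m F → UB w t m G → UB w t m (fun n t x => F n t x * G n t x) := by
  induction m with
  | zero => intro F G _ _ hF hG; exact bd_mul hw hw' hF hG
  | succ m ih =>
    intro F G sF sG hF hG
    refine ⟨bd_mul hw hw' hF.1 hG.1, ?_⟩
    simp only [(sF _).dx_mul (sG _)]
    exact UB.add (fun n => (sF n).dx.mul (sG n)) (fun n => (sF n).mul (sG n).dx)
      (ih (fun n => (sF n).dx) sG hF.2 hG.pred) (ih sF (fun n => (sG n).dx) hF.pred hG.2)

lemma UB.ph (k : ℕ → ℕ) (t : ℝ) (m : ℕ) : ∀ j, UB (fun _ => 1) t m (fun n => Ph (k n) j) := by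
  induction m with
  | zero => intro j; obtain ⟨C, hC⟩ := Ph_bd j; exact ⟨C, fun n x => by simpa using hC (k n) t x⟩
  | succ m ih =>
    intro j
    obtain ⟨C, hC⟩ := Ph_bd j
    refine ⟨⟨C, fun n x => by simpa using hC (k n) t x⟩, ?_⟩
    simp only [Ph_dx]
    exact ih (j + 1)

lemma UB.base {v : ℝ → ℝ → ℝ} {t : ℝ} (hv : ∀ j : ℕ, ∃ C, ∀ x, |(SK.dx^[j] v) t x| ≤ C * wt x)
    (m : ℕ) : ∀ j, UB wt t m (fun _ => SK.dx^[j] v) := by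
  induction m with
  | zero => intro j; obtain ⟨C, hC⟩ := hv j; exact ⟨C, fun _ => hC⟩
  | succ m ih =>
    intro j
    obtain ⟨C, hC⟩ := hv j
    refine ⟨⟨C, fun _ => hC⟩, ?_⟩
    have := ih (j + 1)
    simpa only [Function.iterate_succ_apply'] using this

lemma UB.cmul (c : ℝ) {t : ℝ} {m : ℕ} {G : ℕ → ℝ → ℝ → ℝ} (sG : ∀ n, Sm (G n))
    (h : UB wt t m G) : UB wt t m (fun n t x => c * G n t x) := by
  refine UB.mul (w' := fun _ => 1) (F := fun _ _ _ => c) (fun x => (wt_pos x).le) (by simp)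
    (fun n => Sm.const c) sG ?_ h
  have z : ∀ m, UB (fun _ => 1) t m (fun _ _ _ => (0 : ℝ)) := by
    intro m
    induction m with
    | zero => exact ⟨0, by simp⟩
    | succ m ih =>
      refine ⟨⟨0, by simp⟩, ?_⟩
      have e : SK.dx (fun _ _ => (0 : ℝ)) = fun _ _ => 0 := by funext t x; simp [SK.dx]
      simp only [e]; exact ih
  cases m with
  | zero => exact ⟨|c|, by simp⟩
  | succ m =>
    refine ⟨⟨|c|, by simp⟩, ?_⟩
    have e : SK.dx (fun _ _ => c) = fun _ _ => 0 := by funext t x; simp [SK.dx]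
    simp only [e]; exact z m

lemma L_Cv {F : ℕ → ℝ → ℝ → ℝ} {t : ℝ} (sF : ∀ n, CS (F n)) (h : UB wt t 2 F) {l : ℝ → ℝ}
    (hl : ∀ x, Tendsto (fun n => F n t x) atTop (𝓝 (l x))) :
    Cv (fun n x => L (hh n) (F n) t x) l := by
  obtain ⟨⟨C, hC⟩, _, ⟨B, hB⟩⟩ := h
  refine ⟨fun n => ((L_dec (hh_pos n) (hh_le n) (sF n)).D t).1, ⟨6 * C, fun n x =>
    Lm_bd (hh_pos n) (hh_le n) (hC n) x⟩, fun x => ?_⟩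
  have h1 : Tendsto (fun n => hh n ^ 2 * L (hh n) (dx (dx (F n))) t x) atTop (𝓝 0) := by
    have : Tendsto (fun n => hh n ^ 2 * (6 * B * wt x)) atTop (𝓝 0) := by
      simpa using (hh_lim.pow 2).mul_const (6 * B * wt x)
    refine squeeze_zero_norm (fun n => ?_) this
    rw [Real.norm_eq_abs, abs_mul, abs_of_nonneg (sq_nonneg _)]
    exact mul_le_mul_of_nonneg_left (Lm_bd (hh_pos n) (hh_le n) (hB n) x) (sq_nonneg _)
  have := (hl x).add h1
  rw [add_zero] at this
  refine this.congr fun n => ?_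
  rw [← L_ode (hh_pos n) (sF n) t x]; ring

end SK
end

section
open MeasureTheory Filter Topology
open scoped ContDiff

namespace SK

/-! functions with uniform-in-`m` decay at each time -/
def Sc (g : ℝ → ℝ → ℝ) : Prop := Sm g ∧ ∀ t m, UB wt t m (fun _ => g)

lemma wtn (x : ℝ) : 0 ≤ wt x := (wt_pos x).le
lemma wtn1 (x : ℝ) : 0 ≤ wt x ∧ wt x ≤ 1 := ⟨(wt_pos x).le, wt_le x⟩

lemma Sc.dx {g : ℝ → ℝ → ℝ} (h : Sc g) : Sc (dx g) := ⟨h.1.dx, fun t m => (h.2 t (m + 1)).dx⟩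
lemma Sc.add {f g : ℝ → ℝ → ℝ} (hf : Sc f) (hg : Sc g) : Sc (fun t x => f t x + g t x) :=
  ⟨hf.1.add hg.1, fun t m => UB.add (fun _ => hf.1) (fun _ => hg.1) (hf.2 t m) (hg.2 t m)⟩
lemma Sc.mul {f g : ℝ → ℝ → ℝ} (hf : Sc f) (hg : Sc g) : Sc (fun t x => f t x * g t x) :=
  ⟨hf.1.mul hg.1, fun t m => UB.mul wtn wtn1 (fun _ => hf.1) (fun _ => hg.1) (hf.2 t m) (hg.2 t m)⟩
lemma Sc.cmul {g : ℝ → ℝ → ℝ} (c : ℝ) (hg : Sc g) : Sc (fun t x => c * g t x) :=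
  ⟨(Sm.const c).mul hg.1, fun t m => UB.cmul c (fun _ => hg.1) (hg.2 t m)⟩
lemma Sc.sub {f g : ℝ → ℝ → ℝ} (hf : Sc f) (hg : Sc g) : Sc (fun t x => f t x - g t x) := by
  have := hf.add (hg.cmul (-1))
  simpa [← sub_eq_add_neg] using this
lemma Sc.D {g : ℝ → ℝ → ℝ} (h : Sc g) (t : ℝ) : D (g t) := by
  obtain ⟨C, hC⟩ := (h.2 t 0).bd
  exact ⟨(h.1.slice t).continuous, C, hC 0⟩

noncomputable def cut (N k : ℕ) (g : ℝ → ℝ → ℝ) : ℝ → ℝ → ℝ := fun t x => Ph N k t x * g t x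

lemma cut_cs {g : ℝ → ℝ → ℝ} (h : Sm g) (N k : ℕ) : CS (cut N k g) := (Ph_cs N k).mul h
lemma cut_dx {g : ℝ → ℝ → ℝ} (h : Sm g) (N k : ℕ) :
    dx (cut N k g) = fun t x => cut N (k + 1) g t x + cut N k (dx g) t x := by
  unfold cut
  rw [(Ph_cs N k).1.dx_mul h, Ph_dx]
lemma cut_dt {g : ℝ → ℝ → ℝ} (h : Sm g) (N k : ℕ) : dt (cut N k g) = cut N k (dt g) := by
  unfold cut
  rw [(Ph_cs N k).1.dt_mul h, Ph_dt]
  simp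
lemma cut_UB {g : ℝ → ℝ → ℝ} (h : Sc g) (k : ℕ → ℕ) (j : ℕ) (t : ℝ) (m : ℕ) :
    UB wt t m (fun n => cut (k n) j g) :=
  UB.mul wtn (by simp) (fun n => (Ph_cs (k n) j).1) (fun _ => h.1) (UB.ph k t m j) (h.2 t m)

section
variable {k : ℕ → ℕ} (hk : Tendsto k atTop atTop) {g : ℝ → ℝ → ℝ} (h : Sc g) (t : ℝ)
include hk h
lemma cut_Cv : Cv (fun n x => cut (k n) 0 g t x) (g t) := Cv.ph0 hk t (Cv.const (h.D t))
lemma cutk_Cv (j : ℕ) : Cv (fun n x => cut (k n) (j + 1) g t x) (fun _ => 0) :=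
  Cv.phk hk t j (Cv.const (h.D t))
lemma cut_dx_Cv : Cv (fun n x => dx (cut (k n) 0 g) t x) (dx g t) :=
  ((cutk_Cv hk h t 0).add (cut_Cv hk h.dx t)).congr (fun n x => by rw [cut_dx h.1])
    (fun x => by simp)
lemma L_cut_Cv : Cv (fun n x => L (hh n) (cut (k n) 0 g) t x) (g t) :=
  L_Cv (fun n => cut_cs h.1 _ _) (cut_UB h k 0 t 2) (cut_Cv hk h t).2.2
lemma L_cut_dx_Cv : Cv (fun n x => L (hh n) (dx (cut (k n) 0 g)) t x) (dx g t) :=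
  L_Cv (fun n => (cut_cs h.1 _ _).dx) (cut_UB h k 0 t 3).dx (cut_dx_Cv hk h t).2.2
end

/-! uniform bounds -/
def LB (w : ℝ → ℝ → ℝ) (G : ℕ → ℝ → ℝ → ℝ) : Prop := ∃ K, ∀ N t x, |G N t x| ≤ K * w t x
def one : ℝ → ℝ → ℝ := fun _ _ => 1

lemma LB.add {w : ℝ → ℝ → ℝ} {F G : ℕ → ℝ → ℝ → ℝ} (hF : LB w F) (hG : LB w G) :
    LB w (fun N t x => F N t x + G N t x) := by
  obtain ⟨A, hA⟩ := hF
  obtain ⟨B, hB⟩ := hG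
  refine ⟨A + B, fun N t x => ?_⟩
  calc _ ≤ |F N t x| + |G N t x| := abs_add_le _ _
    _ ≤ _ := by linarith [hA N t x, hB N t x]
lemma LB.mul {w : ℝ → ℝ → ℝ} {F G : ℕ → ℝ → ℝ → ℝ} (hF : LB one F) (hG : LB w G) :
    LB w (fun N t x => F N t x * G N t x) := by
  obtain ⟨A, hA⟩ := hF
  obtain ⟨B, hB⟩ := hG
  refine ⟨A * B, fun N t x => ?_⟩
  have h1 : |F N t x| ≤ A := by simpa [one] using hA N t x
  rw [abs_mul, mul_assoc]
  exact mul_le_mul h1 (hB N t x) (abs_nonneg _) ((abs_nonneg _).trans h1)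
lemma LB.cmul {w : ℝ → ℝ → ℝ} {G : ℕ → ℝ → ℝ → ℝ} (c : ℝ) (hG : LB w G) :
    LB w (fun N t x => c * G N t x) :=
  LB.mul (F := fun _ _ _ => c) ⟨|c|, by simp [one]⟩ hG
lemma LB.neg {w : ℝ → ℝ → ℝ} {G : ℕ → ℝ → ℝ → ℝ} (hG : LB w G) :
    LB w (fun N t x => - G N t x) := by simpa using hG.cmul (-1)
lemma LB.sub {w : ℝ → ℝ → ℝ} {F G : ℕ → ℝ → ℝ → ℝ} (hF : LB w F) (hG : LB w G) :
    LB w (fun N t x => F N t x - G N t x) := by simpa [← sub_eq_add_neg] using hF.add hG.neg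
lemma LB.ph (k : ℕ) : LB one (fun N => Ph N k) := by
  obtain ⟨C, hC⟩ := Ph_bd k
  exact ⟨C, fun N t x => by simpa [one] using hC N t x⟩
lemma LB.cut {w : ℝ → ℝ → ℝ} {g : ℝ → ℝ → ℝ} (k : ℕ) (h : LB w (fun _ => g)) :
    LB w (fun N => cut N k g) := LB.mul (LB.ph k) h
lemma LB.cut_dx {w : ℝ → ℝ → ℝ} {g : ℝ → ℝ → ℝ} (s : Sm g) (k : ℕ) (h : LB w (fun _ => g))
    (h' : LB w (fun _ => dx g)) : LB w (fun N => dx (SK.cut N k g)) := by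
  simp only [SK.cut_dx s]
  exact (h.cut (k + 1)).add (h'.cut k)

structure Sol (α β γ : ℝ) (v p q : ℝ → ℝ → ℝ) : Prop where
  sv : Sc v
  sp : Sc p
  sq : Sc q
  ep : ∀ t x, dt p t x = - dx (dx q) t x
    + (α * v t x + β * (p t x * p t x + q t x * q t x)) * q t x
  eq : ∀ t x, dt q t x = dx (dx p) t x
    - (α * v t x + β * (p t x * p t x + q t x * q t x)) * p t x
  ev : ∀ t x, dt v t x = - dx (dx (dx v)) t x - v t x * dx v t x
    + γ * (2 * (p t x * dx p t x + q t x * dx q t x))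
  bd : ∃ C, ∀ t, (∫ x, v t x ^ 2) + (∫ x, dx v t x ^ 2) + (∫ x, p t x ^ 2) + (∫ x, dx p t x ^ 2)
    + (∫ x, q t x ^ 2) + (∫ x, dx q t x ^ 2) ≤ C

noncomputable def mw (v p q : ℝ → ℝ → ℝ) : ℝ → ℝ → ℝ := fun t x =>
  |v t x| + |dx v t x| + |p t x| + |dx p t x| + |q t x| + |dx q t x|

def rho (p q : ℝ → ℝ → ℝ) : ℝ → ℝ → ℝ := fun t x => p t x * p t x + q t x * q t x
noncomputable def JJ (p q : ℝ → ℝ → ℝ) : ℝ → ℝ → ℝ := fun t x =>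
  2 * (p t x * dx q t x - q t x * dx p t x)
def VV (α β : ℝ) (v p q : ℝ → ℝ → ℝ) : ℝ → ℝ → ℝ := fun t x => α * v t x + β * rho p q t x

section
variable {α β γ : ℝ} {v p q : ℝ → ℝ → ℝ} (S : Sol α β γ v p q)
include S

lemma Sol.rho : Sc (rho p q) := (S.sp.mul S.sp).add (S.sq.mul S.sq)
lemma Sol.J : Sc (JJ p q) := ((S.sp.mul S.sq.dx).sub (S.sq.mul S.sp.dx)).cmul 2
lemma Sol.V : Sc (VV α β v p q) := (S.sv.cmul α).add (S.rho.cmul β)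

lemma Sol.rho_dx : dx (SK.rho p q) = fun t x => 2 * (p t x * dx p t x + q t x * dx q t x) := by
  unfold SK.rho
  rw [(S.sp.1.mul S.sp.1).dx_add (S.sq.1.mul S.sq.1), S.sp.1.dx_mul S.sp.1, S.sq.1.dx_mul S.sq.1]
  funext t x; ring
lemma Sol.J_dx : dx (JJ p q) = fun t x =>
    2 * (p t x * dx (dx q) t x - q t x * dx (dx p) t x) := by
  unfold JJ
  rw [((S.sp.1.mul S.sq.1.dx).sub (S.sq.1.mul S.sp.1.dx)).dx_cmul 2,
    (S.sp.1.mul S.sq.1.dx).dx_sub (S.sq.1.mul S.sp.1.dx), S.sp.1.dx_mul S.sq.1.dx, S.sq.1.dx_mul S.sp.1.dx]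
  funext t x; ring
lemma Sol.V_dx : dx (VV α β v p q) = fun t x => α * dx v t x + β * dx (SK.rho p q) t x := by
  unfold VV
  rw [(S.sv.cmul α).1.dx_add (S.rho.cmul β).1, S.sv.1.dx_cmul, S.rho.1.dx_cmul]
lemma Sol.rho_dt (t x : ℝ) : dt (SK.rho p q) t x = - dx (JJ p q) t x := by
  rw [S.J_dx]
  have : HasDerivAt (fun s => SK.rho p q s x) _ t :=
    ((S.sp.1.ht t x).mul (S.sp.1.ht t x)).add ((S.sq.1.ht t x).mul (S.sq.1.ht t x))
  refine this.deriv.trans ?_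
  rw [S.ep, S.eq]; ring

lemma Sol.bd1 : ∃ C, ∀ t, (∫ x, v t x ^ 2) ≤ C ∧ (∫ x, dx v t x ^ 2) ≤ C ∧ (∫ x, p t x ^ 2) ≤ C ∧
    (∫ x, dx p t x ^ 2) ≤ C ∧ (∫ x, q t x ^ 2) ≤ C ∧ (∫ x, dx q t x ^ 2) ≤ C := by
  obtain ⟨C, hC⟩ := S.bd
  refine ⟨C, fun t => ?_⟩
  have a1 := isq_nonneg (v t)
  have a2 := isq_nonneg (dx v t)
  have a3 := isq_nonneg (p t)
  have a4 := isq_nonneg (dx p t)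
  have a5 := isq_nonneg (q t)
  have a6 := isq_nonneg (dx q t)
  have := hC t
  refine ⟨?_, ?_, ?_, ?_, ?_, ?_⟩ <;> linarith

omit S in
lemma sup_LB {g : ℝ → ℝ → ℝ} (hg : Sc g) {C : ℝ} (h1 : ∀ t, ∫ x, g t x ^ 2 ≤ C)
    (h2 : ∀ t, ∫ x, dx g t x ^ 2 ≤ C) : LB one (fun _ => g) := by
  refine ⟨2 * C + 1, fun _ t x => ?_⟩
  have := sup_sq (hg.D t) (hg.dx.D t) (hg.1.hx t) x
  have a := h1 t
  have b := h2 t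
  simp only [one, mul_one]
  nlinarith [sq_abs (g t x), sq_nonneg (|g t x| - 1)]

lemma Sol.bv : LB one (fun _ => v) := by
  obtain ⟨C, hC⟩ := S.bd1
  exact sup_LB S.sv (fun t => (hC t).1) (fun t => (hC t).2.1)
lemma Sol.bp : LB one (fun _ => p) := by
  obtain ⟨C, hC⟩ := S.bd1
  exact sup_LB S.sp (fun t => (hC t).2.2.1) (fun t => (hC t).2.2.2.1)
lemma Sol.bq : LB one (fun _ => q) := by
  obtain ⟨C, hC⟩ := S.bd1
  exact sup_LB S.sq (fun t => (hC t).2.2.2.2.1) (fun t => (hC t).2.2.2.2.2)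
lemma Sol.brho : LB one (fun _ => SK.rho p q) := (LB.mul S.bp S.bp).add (LB.mul S.bq S.bq)
lemma Sol.bV : LB one (fun _ => VV α β v p q) := (S.bv.cmul α).add (S.brho.cmul β)

omit S in
lemma mw_nonneg (t x : ℝ) : 0 ≤ mw v p q t x := by unfold mw; positivity

omit S in
lemma mw_aux (g : ℝ → ℝ → ℝ) (h : ∀ t x, |g t x| ≤ mw v p q t x) : LB (mw v p q) (fun _ => g) :=
  ⟨1, fun _ t x => by rw [one_mul]; exact h t x⟩
omit S in
lemma mw_all (t x : ℝ) : |v t x| ≤ mw v p q t x ∧ |dx v t x| ≤ mw v p q t x ∧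
    |p t x| ≤ mw v p q t x ∧ |dx p t x| ≤ mw v p q t x ∧ |q t x| ≤ mw v p q t x ∧
    |dx q t x| ≤ mw v p q t x := by
  have a1 := abs_nonneg (v t x)
  have a2 := abs_nonneg (dx v t x)
  have a3 := abs_nonneg (p t x)
  have a4 := abs_nonneg (dx p t x)
  have a5 := abs_nonneg (q t x)
  have a6 := abs_nonneg (dx q t x)
  unfold mw
  refine ⟨?_, ?_, ?_, ?_, ?_, ?_⟩ <;> linarith

omit S in
lemma lv : LB (mw v p q) (fun _ => v) := mw_aux _ fun t x => (mw_all t x).1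
omit S in
lemma lvx : LB (mw v p q) (fun _ => dx v) := mw_aux _ fun t x => (mw_all t x).2.1
omit S in
lemma lp : LB (mw v p q) (fun _ => p) := mw_aux _ fun t x => (mw_all t x).2.2.1
omit S in
lemma lpx : LB (mw v p q) (fun _ => dx p) := mw_aux _ fun t x => (mw_all t x).2.2.2.1
omit S in
lemma lq : LB (mw v p q) (fun _ => q) := mw_aux _ fun t x => (mw_all t x).2.2.2.2.1
omit S in
lemma lqx : LB (mw v p q) (fun _ => dx q) := mw_aux _ fun t x => (mw_all t x).2.2.2.2.2

lemma Sol.lrho : LB (mw v p q) (fun _ => SK.rho p q) := (LB.mul S.bp lp).add (LB.mul S.bq lq)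
lemma Sol.lrhox : LB (mw v p q) (fun _ => dx (SK.rho p q)) := by
  rw [S.rho_dx]
  exact ((LB.mul S.bp lpx).add (LB.mul S.bq lqx)).cmul 2
lemma Sol.lJ : LB (mw v p q) (fun _ => JJ p q) :=
  ((LB.mul S.bp lqx).sub (LB.mul S.bq lpx)).cmul 2
lemma Sol.lVx : LB (mw v p q) (fun _ => dx (VV α β v p q)) := by
  rw [S.V_dx]
  exact (lvx.cmul α).add (S.lrhox.cmul β)

lemma Sol.mw_sq : ∃ C, 0 ≤ C ∧ ∀ t, Integrable (fun x => mw v p q t x ^ 2) ∧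
    ∫ x, mw v p q t x ^ 2 ≤ C := by
  obtain ⟨C, hC⟩ := S.bd
  have hC0 : 0 ≤ C := by
    have := hC 0
    have a1 := isq_nonneg (v 0)
    have a2 := isq_nonneg (dx v 0)
    have a3 := isq_nonneg (p 0)
    have a4 := isq_nonneg (dx p 0)
    have a5 := isq_nonneg (q 0)
    have a6 := isq_nonneg (dx q 0)
    linarith
  refine ⟨6 * C, by linarith, fun t => ?_⟩
  have d1 := S.sv.D t
  have d2 := S.sv.dx.D t
  have d3 := S.sp.D t
  have d4 := S.sp.dx.D t
  have d5 := S.sq.D t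
  have d6 := S.sq.dx.D t
  have e2 := d1.sq.add d2.sq
  have e3 := e2.add d3.sq
  have e4 := e3.add d4.sq
  have e5 := e4.add d5.sq
  have e6 := e5.add d6.sq
  have hp : ∀ x, mw v p q t x ^ 2 ≤ 6 * (v t x ^ 2 + dx v t x ^ 2 + p t x ^ 2 + dx p t x ^ 2
      + q t x ^ 2 + dx q t x ^ 2) := by
    intro x
    unfold mw
    rw [← sq_abs (v t x), ← sq_abs (dx v t x), ← sq_abs (p t x), ← sq_abs (dx p t x),
      ← sq_abs (q t x), ← sq_abs (dx q t x)]
    generalize |v t x| = a1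
    generalize |dx v t x| = a2
    generalize |p t x| = a3
    generalize |dx p t x| = a4
    generalize |q t x| = a5
    generalize |dx q t x| = a6
    have s1 := add_nonneg (add_nonneg (add_nonneg (sq_nonneg (a1 - a2)) (sq_nonneg (a1 - a3)))
      (add_nonneg (sq_nonneg (a1 - a4)) (sq_nonneg (a1 - a5)))) (sq_nonneg (a1 - a6))
    have s2 := add_nonneg (add_nonneg (sq_nonneg (a2 - a3)) (sq_nonneg (a2 - a4)))
      (add_nonneg (sq_nonneg (a2 - a5)) (sq_nonneg (a2 - a6)))
    have s3 := add_nonneg (add_nonneg (sq_nonneg (a3 - a4)) (sq_nonneg (a3 - a5))) (sq_nonneg (a3 - a6))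
    have s4 := add_nonneg (add_nonneg (sq_nonneg (a4 - a5)) (sq_nonneg (a4 - a6))) (sq_nonneg (a5 - a6))
    linarith
  have hm : Continuous (fun x => mw v p q t x ^ 2) := by
    unfold mw
    have := d1.1
    have := d2.1
    have := d3.1
    have := d4.1
    have := d5.1
    have := d6.1
    fun_prop
  have hi : Integrable (fun x => mw v p q t x ^ 2) :=
    (e6.cmul 6).int.mono' hm.aestronglyMeasurable (Eventually.of_forall fun x => by
      rw [Real.norm_eq_abs, abs_of_nonneg (sq_nonneg _)]; exact hp x)
  refine ⟨hi, (integral_mono hi (e6.cmul 6).int hp).trans ?_⟩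
  rw [integral_const_mul, integral_add e5.int d6.sq.int, integral_add e4.int d5.sq.int,
    integral_add e3.int d4.sq.int, integral_add e2.int d3.sq.int, integral_add d1.sq.int d2.sq.int]
  have := hC t
  linarith

lemma Sol.isq {G : ℕ → ℝ → ℝ → ℝ} (h : LB (mw v p q) G) (hG : ∀ N, CS (G N)) :
    ∃ K, 0 ≤ K ∧ ∀ N t, ∫ x, G N t x ^ 2 ≤ K := by
  obtain ⟨C, hC0, hC⟩ := S.mw_sq
  obtain ⟨B, hB⟩ := h
  refine ⟨B ^ 2 * C, by positivity, fun N t => ?_⟩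
  calc _ ≤ ∫ x, B ^ 2 * mw v p q t x ^ 2 :=
        integral_mono ((hG N).dec.D t).sq.int ((hC t).1.const_mul _) (fun x => by
          simp only
          rw [← mul_pow, ← sq_abs (G N t x)]
          exact pow_le_pow_left₀ (abs_nonneg _) (hB N t x) 2)
    _ = B ^ 2 * ∫ x, mw v p q t x ^ 2 := integral_const_mul _ _
    _ ≤ _ := by have := (hC t).2; gcongr
end
end SK
end

section
open MeasureTheory Filter Topology
open scoped ContDiff

namespace SK

lemma diag2 {e mn er : ℕ → ℕ → ℝ → ℝ → ℝ} {th : ℕ → ℝ → ℝ → ℝ} {li ei : ℝ → ℝ → ℝ} {C a b : ℝ}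
    (hab : a ≤ b)
    (bal : ∀ n N, (∫ x, e n N b x) - (∫ x, e n N a x)
      = ∫ t in a..b, ∫ x, (mn n N t x + er n N t x))
    (dm : ∀ n N, Dec (mn n N)) (de : ∀ n N, Dec (er n N))
    (err : ∀ n N t, |∫ x, er n N t x| ≤ C * (hh n + (hh n)⁻¹ ^ 5 * ∫ x, th N t x))
    (Mb : ∃ K, ∀ n N t, |∫ x, mn n N t x| ≤ K)
    (dth : ∀ N, Dec (th N)) (θn : ∀ N t x, 0 ≤ th N t x) (θb : ∃ K, ∀ N t, ∫ x, th N t x ≤ K)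
    (θ0 : ∀ t, Cv (fun N x => th N t x) (fun _ => 0))
    (lim : ∀ k : ℕ → ℕ, Tendsto k atTop atTop → ∀ t, Cv (fun n x => mn n (k n) t x) (li t))
    (limE : ∀ k : ℕ → ℕ, Tendsto k atTop atTop → ∀ t, Cv (fun n x => e n (k n) t x) (ei t)) :
    IntervalIntegrable (fun t => ∫ x, li t x) volume a b ∧
      (∫ x, ei b x) - (∫ x, ei a x) = ∫ t in a..b, ∫ x, li t x := by
  obtain ⟨K1, h1⟩ := Mb
  obtain ⟨K2, h2⟩ := θb
  refine diag (E := fun n N t => ∫ x, e n N t x) (M := fun n N t => ∫ x, mn n N t x)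
    (S := fun n N t => ∫ x, (mn n N t x + er n N t x)) (θ := fun N t => ∫ x, th N t x)
    (Einf := fun t => ∫ x, ei t x) (C := C) (K := max K1 K2) hab bal
    (fun n N => ((dm n N).add (de n N)).cont_int) (fun n N => (dm n N).cont_int) ?_
    (fun n N t => (h1 n N t).trans (le_max_left _ _)) (fun N => (dth N).cont_int)
    (fun N t => integral_nonneg (θn N t)) (fun N t => (h2 N t).trans (le_max_right _ _)) ?_ ?_ ?_
  · intro n N t
    rw [integral_add ((dm n N).D t).int ((de n N).D t).int, add_sub_cancel_left]
    exact err n N t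
  · intro t
    simpa using (θ0 t).int
  · intro k hk t; exact (lim k hk t).int
  · intro k hk t; exact (limE k hk t).int

lemma cut_dx2 {g : ℝ → ℝ → ℝ} (h : Sm g) (N k : ℕ) : dx (dx (cut N k g)) = fun t x =>
    cut N (k + 2) g t x + 2 * cut N (k + 1) (dx g) t x + cut N k (dx (dx g)) t x := by
  rw [cut_dx h, (cut_cs h _ _).1.dx_add (cut_cs h.dx _ _).1, cut_dx h, cut_dx h.dx]
  funext t x; ring
lemma cut_dx3 {g : ℝ → ℝ → ℝ} (h : Sm g) (N k : ℕ) : dx (dx (dx (cut N k g))) = fun t x =>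
    cut N (k + 3) g t x + 3 * cut N (k + 2) (dx g) t x + 3 * cut N (k + 1) (dx (dx g)) t x
      + cut N k (dx (dx (dx g))) t x := by
  rw [cut_dx2 h, (((cut_cs h _ _).add ((cut_cs h.dx _ _).cmul 2))).1.dx_add (cut_cs h.dx.dx _ _).1,
    (cut_cs h _ _).1.dx_add ((cut_cs h.dx _ _).cmul 2).1, (cut_cs h.dx _ _).1.dx_cmul,
    cut_dx h, cut_dx h.dx, cut_dx h.dx.dx]
  funext t x; ring
lemma L_cut_dx2_Cv {k : ℕ → ℕ} (hk : Tendsto k atTop atTop) {g : ℝ → ℝ → ℝ} (h : Sc g) (t : ℝ) :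
    Cv (fun n x => L (hh n) (dx (dx (cut (k n) 0 g))) t x) (dx (dx g) t) := by
  refine L_Cv (fun n => (cut_cs h.1 _ _).dx.dx) (cut_UB h k 0 t 4).dx.dx ?_
  suffices h : Cv (fun n x => dx (dx (cut (k n) 0 g)) t x) (dx (dx g) t) from h.2.2
  refine (((cutk_Cv hk h t 1).add ((cutk_Cv hk h.dx t 0).cmul 2)).add (cut_Cv hk h.dx.dx t)).congr
    (fun n x => ?_) (fun x => ?_)
  · rw [cut_dx2 h.1]
  · simp

lemma dbd {A B : ℕ → ℝ → ℝ → ℝ} (hA : ∃ K, 0 ≤ K ∧ ∀ N t, ∫ x, A N t x ≤ K)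
    (hB : ∃ K, 0 ≤ K ∧ ∀ N t, ∫ x, B N t x ≤ K) (dA : ∀ N, Dec (A N)) (dB : ∀ N, Dec (B N)) :
    ∃ K, 0 ≤ K ∧ ∀ N t, ∫ x, (A N t x + B N t x) ≤ K := by
  obtain ⟨K, k0, hK⟩ := hA
  obtain ⟨K', k0', hK'⟩ := hB
  refine ⟨K + K', by positivity, fun N t => ?_⟩
  rw [integral_add ((dA N).D t).int ((dB N).D t).int]
  exact add_le_add (hK N t) (hK' N t)

section
variable {α β γ : ℝ} {v p q : ℝ → ℝ → ℝ} (S : Sol α β γ v p q)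
include S

lemma Sol.E2 {a b : ℝ} (hab : a ≤ b) :
    IntervalIntegrable (fun t => ∫ x, (2 * (dx p t x * dx (fun t x => VV α β v p q t x * q t x) t x)
      - 2 * (dx q t x * dx (fun t x => VV α β v p q t x * p t x) t x))) volume a b ∧
    (∫ x, (dx p b x ^ 2 + dx q b x ^ 2)) - (∫ x, (dx p a x ^ 2 + dx q a x ^ 2)) =
    ∫ t in a..b, ∫ x, (2 * (dx p t x * dx (fun t x => VV α β v p q t x * q t x) t x)
      - 2 * (dx q t x * dx (fun t x => VV α β v p q t x * p t x) t x)) := by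
  have sa : Sc (fun t x => VV α β v p q t x * q t x) := S.V.mul S.sq
  have sb : Sc (fun t x => VV α β v p q t x * p t x) := S.V.mul S.sp
  set A := fun t x => VV α β v p q t x * q t x with hA
  set B := fun t x => VV α β v p q t x * p t x with hB
  have lA : LB (mw v p q) (fun _ => A) := LB.mul S.bV lq
  have lB : LB (mw v p q) (fun _ => B) := LB.mul S.bV lp
  have lAx : LB (mw v p q) (fun _ => dx A) := by
    rw [hA, S.V.1.dx_mul S.sq.1]
    have := (LB.mul S.bq S.lVx).add (LB.mul S.bV lqx)
    simpa only [mul_comm] using this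
  have lBx : LB (mw v p q) (fun _ => dx B) := by
    rw [hB, S.V.1.dx_mul S.sp.1]
    have := (LB.mul S.bp S.lVx).add (LB.mul S.bV lpx)
    simpa only [mul_comm] using this
  have cf := fun N => cut_cs S.sp.1 N 0
  have cg := fun N => cut_cs S.sq.1 N 0
  have ca := fun N => cut_cs sa.1 N 0
  have cb := fun N => cut_cs sb.1 N 0
  have cm := fun N => (cut_cs S.sq.1 N 1).cmul 2
  have cm' := fun N => (cut_cs S.sp.1 N 1).cmul 2
  have cn := fun N => cut_cs S.sq.1 N 2
  have cn' := fun N => cut_cs S.sp.1 N 2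
  obtain ⟨K1, p1, k1⟩ := S.isq (LB.cut_dx S.sp.1 0 lp lpx) (fun N => (cf N).dx)
  obtain ⟨K2, p2, k2⟩ := S.isq (LB.cut_dx S.sq.1 0 lq lqx) (fun N => (cg N).dx)
  obtain ⟨K3, p3, k3⟩ := S.isq (LB.cut_dx sa.1 0 lA lAx) (fun N => (ca N).dx)
  obtain ⟨K4, p4, k4⟩ := S.isq (LB.cut_dx sb.1 0 lB lBx) (fun N => (cb N).dx)
  obtain ⟨K, hK⟩ : ∃ K, K = K1 + K2 + K3 + K4 := ⟨_, rfl⟩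
  have k1' : ∀ N t, ∫ x, dx (cut N 0 p) t x ^ 2 ≤ K := fun N t => (k1 N t).trans (by linarith)
  have k2' : ∀ N t, ∫ x, dx (cut N 0 q) t x ^ 2 ≤ K := fun N t => (k2 N t).trans (by linarith)
  have k3' : ∀ N t, ∫ x, dx (cut N 0 A) t x ^ 2 ≤ K := fun N t => (k3 N t).trans (by linarith)
  have k4' : ∀ N t, ∫ x, dx (cut N 0 B) t x ^ 2 ≤ K := fun N t => (k4 N t).trans (by linarith)
  refine diag2 (e := fun n N => e2 (hh n) (cut N 0 p) (cut N 0 q))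
    (mn := fun n N => main2 (hh n) (cut N 0 p) (cut N 0 q) (cut N 0 A) (cut N 0 B))
    (er := fun n N => err2 (hh n) (cut N 0 p) (cut N 0 q) (fun t x => 2 * cut N 1 q t x)
      (fun t x => 2 * cut N 1 p t x) (cut N 2 q) (cut N 2 p))
    (th := fun N t x => (((2 * cut N 1 q t x) ^ 2 + (2 * cut N 1 p t x) ^ 2)
      + (dx (cut N 2 q) t x ^ 2 + dx (cut N 2 p) t x ^ 2)))
    (li := fun t x => 2 * (dx p t x * dx A t x) - 2 * (dx q t x * dx B t x))
    (ei := fun t x => dx p t x ^ 2 + dx q t x ^ 2) (C := 8 * K + 2) hab ?_ ?_ ?_ ?_ ?_ ?_ ?_ ?_ ?_ ?_ ?_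
  · intro n N
    refine e2_bal (hh_pos n) (hh_le n) (cf N) (cg N) (ca N) (cb N) (cm N) (cm' N) (cn N) (cn' N)
      ?_ ?_ a b
    · intro t x
      rw [cut_dt S.sp.1, cut_dx2 S.sq.1, (cut_cs S.sq.1 N 1).1.dx_cmul, cut_dx S.sq.1]
      simp only [cut, S.ep, hA, VV, SK.rho]
      ring
    · intro t x
      rw [cut_dt S.sq.1, cut_dx2 S.sp.1, (cut_cs S.sp.1 N 1).1.dx_cmul, cut_dx S.sp.1]
      simp only [cut, S.eq, hB, VV, SK.rho]
      ring
  · exact fun n N => main2_dec (hh_pos n) (hh_le n) (cf N) (cg N) (ca N) (cb N)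
  · exact fun n N => err2_dec (hh_pos n) (hh_le n) (cf N) (cg N) (cm N) (cm' N) (cn N) (cn' N)
  · exact fun n N t => err2_bd (hh_pos n) (hh_le n) (cf N) (cg N) (cm N) (cm' N) (cn N) (cn' N) t
      (k1' N t) (k2' N t)
  · exact ⟨8 * K, fun n N t => main2_bd (hh_pos n) (hh_le n) (cf N) (cg N) (ca N) (cb N) t
      (k1' N t) (k2' N t) (k3' N t) (k4' N t)⟩
  · exact fun N => ((cm N).dec.sq.add (cm' N).dec.sq).add ((cn N).dx.dec.sq.add (cn' N).dx.dec.sq)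
  · intro N t x; positivity
  · have b1 := S.isq ((lq.cut 1).cmul 2) cm
    have b2 := S.isq ((lp.cut 1).cmul 2) cm'
    have b3 := S.isq (LB.cut_dx S.sq.1 2 lq lqx) (fun N => (cn N).dx)
    have b4 := S.isq (LB.cut_dx S.sp.1 2 lp lpx) (fun N => (cn' N).dx)
    obtain ⟨K, -, hK⟩ := dbd (dbd b1 b2 (fun N => (cm N).dec.sq) (fun N => (cm' N).dec.sq))
      (dbd b3 b4 (fun N => (cn N).dx.dec.sq) (fun N => (cn' N).dx.dec.sq))
      (fun N => (cm N).dec.sq.add (cm' N).dec.sq) (fun N => (cn N).dx.dec.sq.add (cn' N).dx.dec.sq)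
    exact ⟨K, hK⟩
  · intro t
    have hk : Tendsto (fun n : ℕ => n) atTop atTop := tendsto_id
    have c1 := ((cutk_Cv hk S.sq t 0).cmul 2).sq
    have c2 := ((cutk_Cv hk S.sp t 0).cmul 2).sq
    have c3 := ((cutk_Cv hk S.sq t 2).add (cutk_Cv hk S.sq.dx t 1)).sq
    have c4 := ((cutk_Cv hk S.sp t 2).add (cutk_Cv hk S.sp.dx t 1)).sq
    refine ((c1.add c2).add (c3.add c4)).congr (fun n x => ?_) (fun x => ?_)
    · simp only [cut_dx S.sq.1, cut_dx S.sp.1]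
    · simp
  · intro k hk t
    exact (((L_cut_dx_Cv hk S.sp t).mul (L_cut_dx_Cv hk sa t)).cmul 2).sub
      (((L_cut_dx_Cv hk S.sq t).mul (L_cut_dx_Cv hk sb t)).cmul 2)
  · intro k hk t
    exact (L_cut_dx_Cv hk S.sp t).sq.add (L_cut_dx_Cv hk S.sq t).sq

lemma Sol.iprod {G H : ℕ → ℝ → ℝ → ℝ} (hG : LB (mw v p q) G) (hH : LB (mw v p q) H) :
    ∃ K, ∀ N t, |∫ x, G N t x * H N t x| ≤ K := by
  obtain ⟨C, hC0, hC⟩ := S.mw_sq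
  obtain ⟨A, hA⟩ := hG
  obtain ⟨B, hB⟩ := hH
  refine ⟨|A| * |B| * C, fun N t => ?_⟩
  have h1 : |∫ x, G N t x * H N t x| ≤ ∫ x, |A| * |B| * mw v p q t x ^ 2 :=
        norm_integral_le_of_norm_le ((hC t).1.const_mul (|A| * |B|)) (Eventually.of_forall fun x => by
          have hm : 0 ≤ mw v p q t x := mw_nonneg t x
          rw [Real.norm_eq_abs, abs_mul]
          calc _ ≤ (|A| * mw v p q t x) * (|B| * mw v p q t x) := by
                refine mul_le_mul ((hA N t x).trans ?_) ((hB N t x).trans ?_) (abs_nonneg _) (by positivity)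
                · gcongr; exact le_abs_self _
                · gcongr; exact le_abs_self _
            _ = _ := by ring)
  rw [integral_const_mul] at h1
  exact h1.trans (mul_le_mul_of_nonneg_left (hC t).2 (by positivity))

lemma Sol.E3 {a b : ℝ} (hab : a ≤ b) :
    IntervalIntegrable (fun t => ∫ x, 2 * (dx (SK.rho p q) t x * JJ p q t x)) volume a b ∧
    (∫ x, SK.rho p q b x ^ 2) - (∫ x, SK.rho p q a x ^ 2) =
    ∫ t in a..b, ∫ x, 2 * (dx (SK.rho p q) t x * JJ p q t x) := by
  have R := S.rho
  have J := S.J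
  have lR := S.lrho
  have lRx := S.lrhox
  have lJ := S.lJ
  have eR := S.rho_dt
  set r := SK.rho p q with hr
  set j := JJ p q with hj
  have cr := fun N k => cut_cs R.1 N k
  have crx := fun N k => cut_cs R.dx.1 N k
  have dm : ∀ N, Dec (fun t x => 2 * ((cut N 1 r t x + cut N 0 (dx r) t x) * j t x)) := fun N =>
    ((((cr N 1).add (crx N 0)).mul J.1).cmul 2).dec
  refine diag2 (e := fun _ N t x => cut N 0 r t x * r t x)
    (mn := fun _ N t x => 2 * ((cut N 1 r t x + cut N 0 (dx r) t x) * j t x))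
    (er := fun _ _ _ _ => 0) (th := fun _ _ _ => 0)
    (li := fun t x => 2 * (dx r t x * j t x)) (ei := fun t x => r t x ^ 2) (C := 0)
    hab ?_ ?_ ?_ ?_ ?_ ?_ ?_ ?_ ?_ ?_ ?_
  · intro n N
    simp only [add_zero]
    refine balance (e := fun t x => cut N 0 r t x * r t x)
      (et := fun t x => -2 * (cut N 0 r t x * dx j t x))
      (F := fun t x => -2 * (cut N 0 r t x * j t x)) ?_ ?_ ?_ (dm N) ?_ ?_ a b
    · exact ((cr N 0).mul R.1).dec
    · exact (((cr N 0).mul J.dx.1).cmul _).dec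
    · exact (((cr N 0).mul J.1).cmul _).dec
    · intro t x
      refine (((cr N 0).1.ht t x).mul (R.1.ht t x)).congr_deriv ?_
      rw [cut_dt R.1]
      simp only [cut, eR]
      ring
    · intro t x
      refine ((((cr N 0).1.hx t x).mul (J.1.hx t x)).const_mul (-2)).congr_deriv ?_
      rw [cut_dx R.1]
      ring
  · exact fun n N => dm N
  · exact fun n N => (CS.dec (f := fun _ _ => 0) ⟨Sm.const 0, 0, fun _ _ _ => rfl⟩)
  · simp
  · obtain ⟨K, hK⟩ := S.iprod (((lR.cut 1).add (lRx.cut 0)).cmul 2) lJ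
    exact ⟨K, fun n N t => by simpa only [mul_assoc] using hK N t⟩
  · exact fun N => (CS.dec (f := fun _ _ => 0) ⟨Sm.const 0, 0, fun _ _ _ => rfl⟩)
  · simp
  · exact ⟨0, by simp⟩
  · exact fun t => ⟨fun _ => continuous_const, ⟨0, by simp⟩, fun _ => tendsto_const_nhds⟩
  · intro k hk t
    refine ((((cutk_Cv hk R t 0).add (cut_Cv hk R.dx t)).mul (Cv.const (J.D t))).cmul 2).congr
      (fun n x => rfl) (fun x => ?_)
    simp
  · intro k hk t
    exact ((cut_Cv hk R t).mul (Cv.const (R.D t))).congr (fun n x => rfl) (fun x => by ring)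
end
end SK
end

section
open MeasureTheory Filter Topology
open scoped ContDiff

namespace SK

noncomputable def mu0 (γ : ℝ) (v r : ℝ → ℝ → ℝ) (N : ℕ) : ℝ → ℝ → ℝ := fun t x =>
  cut N 3 v t x - cut N 0 (fun t x => v t x * dx v t x) t x + cut N 0 v t x * cut N 0 (dx v) t x
    + cut N 0 v t x * cut N 1 v t x - γ * cut N 1 r t x

section
variable {α β γ : ℝ} {v p q : ℝ → ℝ → ℝ} (S : Sol α β γ v p q)
include S

lemma Sol.E1 {a b : ℝ} (hab : a ≤ b) :
    IntervalIntegrable (fun t => ∫ x, (γ * ((- (v t x * dx v t x) + γ * dx (SK.rho p q) t x) * SK.rho p q t x)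
      + γ * (dx v t x * JJ p q t x)
      - 2⁻¹ * v t x ^ 2 * (- (v t x * dx v t x) + γ * dx (SK.rho p q) t x))) volume a b ∧
    (∫ x, (2⁻¹ * dx v b x ^ 2 - 6⁻¹ * v b x ^ 3 + γ * (v b x * SK.rho p q b x))) -
    (∫ x, (2⁻¹ * dx v a x ^ 2 - 6⁻¹ * v a x ^ 3 + γ * (v a x * SK.rho p q a x))) =
    ∫ t in a..b, ∫ x, (γ * ((- (v t x * dx v t x) + γ * dx (SK.rho p q) t x) * SK.rho p q t x)
      + γ * (dx v t x * JJ p q t x)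
      - 2⁻¹ * v t x ^ 2 * (- (v t x * dx v t x) + γ * dx (SK.rho p q) t x)) := by
  have V := S.sv
  have R := S.rho
  have J := S.J
  have bv := S.bv
  have lR := S.lrho
  have lRx := S.lrhox
  have lJ := S.lJ
  have eR := S.rho_dt
  have eRx := S.rho_dx
  set r := SK.rho p q with hr
  set j := JJ p q with hj
  have cf := fun N => cut_cs V.1 N 0
  have cr := fun N => cut_cs R.1 N 0
  have cj := fun N => cut_cs J.1 N 0
  have c1 := fun N => (cut_cs V.dx.1 N 1).cmul 3
  have cl := fun N => cut_cs J.1 N 1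
  have c0 : ∀ N, CS (mu0 γ v r N) := fun N =>
    ((((cut_cs V.1 N 3).sub (cut_cs (V.mul V.dx).1 N 0)).add
      ((cut_cs V.1 N 0).mul (cut_cs V.dx.1 N 0).1)).add
      ((cut_cs V.1 N 0).mul (cut_cs V.1 N 1).1)).sub ((cut_cs R.1 N 1).cmul γ)
  have l0 : LB (mw v p q) (mu0 γ v r) :=
    ((((lv.cut 3).sub ((LB.mul bv lvx).cut 0)).add
      (LB.mul (bv.cut 0) (lvx.cut 0))).add
      (LB.mul (bv.cut 0) (lv.cut 1))).sub ((lR.cut 1).cmul γ)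
  have cg : ∀ N, CS (fun t x => - (cut N 0 v t x * dx (cut N 0 v) t x) + γ * dx (cut N 0 r) t x) :=
    fun N => n1_cs (cf N) (cr N)
  have lg : LB (mw v p q) (fun N t x => - (cut N 0 v t x * dx (cut N 0 v) t x)
      + γ * dx (cut N 0 r) t x) :=
    (LB.mul (bv.cut 0) (LB.cut_dx V.1 0 lv lvx)).neg.add ((LB.cut_dx R.1 0 lR lRx).cmul γ)
  obtain ⟨K1, p1, k1⟩ := S.isq (lv.cut 0) cf
  obtain ⟨K2, p2, k2⟩ := S.isq (LB.cut_dx V.1 0 lv lvx) (fun N => (cf N).dx)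
  obtain ⟨K3, p3, k3⟩ := S.isq (lR.cut 0) cr
  obtain ⟨K4, p4, k4⟩ := S.isq (lJ.cut 0) cj
  obtain ⟨K5, p5, k5⟩ := S.isq lg cg
  obtain ⟨K, hK⟩ : ∃ K, K = K1 + K2 + K3 + K4 + K5 := ⟨_, rfl⟩
  have k1' : ∀ N t, ∫ x, cut N 0 v t x ^ 2 ≤ K := fun N t => (k1 N t).trans (by linarith)
  have k2' : ∀ N t, ∫ x, dx (cut N 0 v) t x ^ 2 ≤ K := fun N t => (k2 N t).trans (by linarith)
  have k3' : ∀ N t, ∫ x, cut N 0 r t x ^ 2 ≤ K := fun N t => (k3 N t).trans (by linarith)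
  have k4' : ∀ N t, ∫ x, cut N 0 j t x ^ 2 ≤ K := fun N t => (k4 N t).trans (by linarith)
  refine diag2 (e := fun n N => e1 (hh n) γ (cut N 0 v) (cut N 0 r))
    (mn := fun n N => main1 (hh n) γ (cut N 0 v) (cut N 0 r) (cut N 0 j))
    (er := fun n N => err1 (hh n) γ (cut N 0 v) (cut N 0 r) (fun t x => 3 * cut N 1 (dx v) t x)
      (mu0 γ v r N) (cut N 1 j))
    (th := fun N t x => (3 * cut N 1 (dx v) t x) ^ 2 + mu0 γ v r N t x ^ 2 + cut N 1 j t x ^ 2)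
    (ei := fun t x => 2⁻¹ * dx v t x ^ 2 - 6⁻¹ * v t x ^ 3 + γ * (v t x * r t x))
    (C := 12 * K ^ 2 + 2 * K + 3 * |γ| * K + 4 + 3 * |γ|) hab ?_ ?_ ?_ ?_ ?_ ?_ ?_ ?_ ?_ ?_ ?_
  · intro n N
    refine e1_bal (hh_pos n) (hh_le n) (cf N) (cr N) (cj N) (c1 N) (c0 N) (cl N) ?_ ?_ a b
    · intro t x
      rw [cut_dt V.1, cut_dx3 V.1, cut_dx V.1, cut_dx R.1, (cut_cs V.dx.1 N 1).1.dx_cmul,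
        cut_dx V.dx.1]
      simp only [cut, S.ev, mu0, eRx]
      ring
    · intro t x
      rw [cut_dt R.1, cut_dx J.1]
      simp only [cut, eR]
      ring
  · exact fun n N => main1_dec (hh_pos n) (hh_le n) (cf N) (cr N) (cj N)
  · exact fun n N => err1_dec (hh_pos n) (hh_le n) (cf N) (cr N) (c1 N) (c0 N) (cl N)
  · exact fun n N t => err1_bd (hh_pos n) (hh_le n) (cf N) (cr N) (c1 N) (c0 N) (cl N) t
      (k1' N t) (k2' N t) (k3' N t)
  · exact ⟨_, fun n N t => main1_bd (hh_pos n) (hh_le n) (cf N) (cr N) (cj N) t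
      (k1' N t) (k2' N t) (k3' N t) (k4' N t) ((k5 N t).trans (by linarith))⟩
  · exact fun N => ((c1 N).dec.sq.add (c0 N).dec.sq).add (cl N).dec.sq
  · intro N t x; positivity
  · obtain ⟨K, -, hK⟩ := dbd (dbd (S.isq ((lvx.cut 1).cmul 3) c1) (S.isq l0 c0)
      (fun N => (c1 N).dec.sq) (fun N => (c0 N).dec.sq)) (S.isq (lJ.cut 1) cl)
      (fun N => (c1 N).dec.sq.add (c0 N).dec.sq) (fun N => (cl N).dec.sq)
    exact ⟨K, hK⟩
  · intro t
    have hk : Tendsto (fun n : ℕ => n) atTop atTop := tendsto_id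
    have d1 := ((cutk_Cv hk V.dx t 0).cmul 3).sq
    have d2 := (((((cutk_Cv hk V t 2).sub (cut_Cv hk (V.mul V.dx) t)).add
      ((cut_Cv hk V t).mul (cut_Cv hk V.dx t))).add ((cut_Cv hk V t).mul (cutk_Cv hk V t 0))).sub
      ((cutk_Cv hk R t 0).cmul γ)).sq
    have d3 := (cutk_Cv hk J t 0).sq
    refine ((d1.add d2).add d3).congr (fun n x => rfl) (fun x => ?_)
    simp
  · intro k hk t
    have z0 := L_cut_Cv hk V t
    have z1 := L_cut_dx_Cv hk V t
    have z2 := L_cut_dx2_Cv hk V t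
    have hg : Cv (fun n x => n1 (hh n) γ (cut (k n) 0 v) (cut (k n) 0 r) t x)
        (fun x => - (v t x * dx v t x) + γ * dx r t x) := by
      refine L_Cv (fun n => cg (k n)) ?_
        (((cut_Cv hk V t).mul (cut_dx_Cv hk V t)).neg.add ((cut_dx_Cv hk R t).cmul γ)).2.2
      have u1 := UB.mul (t := t) (m := 2) wtn wtn1 (fun n => (cf (k n)).1) (fun n => (cf (k n)).dx.1)
        (cut_UB V k 0 t 2) (cut_UB V k 0 t 3).dx
      have u2 := UB.cmul (-1) (fun n => ((cf (k n)).mul (cf (k n)).dx.1).1) u1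
      have u3 := UB.cmul γ (fun n => (cr (k n)).dx.1) (cut_UB R k 0 t 3).dx
      have := UB.add (fun n => (((cf (k n)).mul (cf (k n)).dx.1).cmul (-1)).1)
        (fun n => ((cr (k n)).dx.cmul γ).1) u2 u3
      simpa only [neg_one_mul] using this
    have hW := (((z0.sq.cmul 2⁻¹).sub ((z1.sq.eps).cmul 6⁻¹)).sub (((z0.mul z2).eps).cmul 3⁻¹))
    refine ((((hg.mul (cut_Cv hk R t)).cmul γ).add ((z1.mul (cut_Cv hk J t)).cmul γ)).sub
      (hW.mul hg)).congr (fun n x => ?_) (fun x => ?_)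
    · unfold main1 W1; ring
    · ring
  · intro k hk t
    have z0 := L_cut_Cv hk V t
    have z1 := L_cut_dx_Cv hk V t
    have z2 := L_cut_dx2_Cv hk V t
    refine (((((z1.sq.cmul 2⁻¹).add (z2.sq.eps.cmul 2⁻¹)).sub (z0.cube.cmul 6⁻¹)).sub
      ((z0.mul z1.sq).eps.cmul 6⁻¹)).add ((z0.mul (cut_Cv hk R t)).cmul γ)).congr
      (fun n x => ?_) (fun x => ?_)
    · unfold e1; ring
    · ring

lemma Sol.lim0 (t : ℝ) :
    α * (∫ x, (γ * ((- (v t x * dx v t x) + γ * dx (SK.rho p q) t x) * SK.rho p q t x)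
      + γ * (dx v t x * JJ p q t x)
      - 2⁻¹ * v t x ^ 2 * (- (v t x * dx v t x) + γ * dx (SK.rho p q) t x)))
    + γ * (∫ x, (2 * (dx p t x * dx (fun t x => VV α β v p q t x * q t x) t x)
      - 2 * (dx q t x * dx (fun t x => VV α β v p q t x * p t x) t x)))
    + β * γ / 2 * (∫ x, 2 * (dx (SK.rho p q) t x * JJ p q t x)) = 0 := by
  have V := S.sv.D t
  have Vx := S.sv.dx.D t
  have R := S.rho.D t
  have Rx := S.rho.dx.D t
  have J := S.J.D t
  have G : D (fun x => - (v t x * dx v t x) + γ * dx (SK.rho p q) t x) :=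
    (V.mul Vx).neg.add (Rx.cmul γ)
  have i1 : D (fun x => γ * ((- (v t x * dx v t x) + γ * dx (SK.rho p q) t x) * SK.rho p q t x)
      + γ * (dx v t x * JJ p q t x)
      - 2⁻¹ * v t x ^ 2 * (- (v t x * dx v t x) + γ * dx (SK.rho p q) t x)) :=
    (((G.mul R).cmul γ).add ((Vx.mul J).cmul γ)).sub ((V.sq.cmul 2⁻¹).mul G)
  have i2 : D (fun x => 2 * (dx p t x * dx (fun t x => VV α β v p q t x * q t x) t x)
      - 2 * (dx q t x * dx (fun t x => VV α β v p q t x * p t x) t x)) :=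
    (((S.sp.dx.D t).mul ((S.V.mul S.sq).dx.D t)).cmul 2).sub
    (((S.sq.dx.D t).mul ((S.V.mul S.sp).dx.D t)).cmul 2)
  have i3 : D (fun x => 2 * (dx (SK.rho p q) t x * JJ p q t x)) := (Rx.mul J).cmul 2
  rw [← integral_const_mul, ← integral_const_mul, ← integral_const_mul,
    ← integral_add (i1.cmul α).int (i2.cmul γ).int,
    ← integral_add ((i1.cmul α).add (i2.cmul γ)).int (i3.cmul _).int]
  have dF : D (fun x => α * (2⁻¹ * γ ^ 2 * SK.rho p q t x ^ 2 - 2⁻¹ * γ * (v t x ^ 2 * SK.rho p q t x)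
      + 8⁻¹ * (v t x ^ 2) ^ 2)) :=
    (((R.sq.cmul _).sub ((V.sq.mul R).cmul _)).add (V.sq.sq.cmul _)).cmul α
  refine integral_eq_zero_of_hasDerivAt_of_integrable (f := fun x => α * (2⁻¹ * γ ^ 2 * SK.rho p q t x ^ 2
    - 2⁻¹ * γ * (v t x ^ 2 * SK.rho p q t x) + 8⁻¹ * (v t x ^ 2) ^ 2)) ?_
    (((i1.cmul α).add (i2.cmul γ)).add (i3.cmul _)).int dF.int
  intro x
  have hr := S.rho.1.hx t x
  have hv := S.sv.1.hx t x
  refine (((((hr.pow 2).const_mul _).sub (((hv.pow 2).mul hr).const_mul _)).add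
    (((hv.pow 2).pow 2).const_mul _)).const_mul α).congr_deriv ?_
  rw [S.V.1.dx_mul S.sq.1, S.V.1.dx_mul S.sp.1, S.V_dx]
  simp only [JJ]
  push_cast
  simp only [Pi.pow_apply]
  ring

lemma Sol.cons {a b : ℝ} (hab : a ≤ b) :
    (∫ x, (α * γ * v b x * SK.rho p q b x - α / 6 * v b x ^ 3 + β * γ / 2 * SK.rho p q b x ^ 2
      + α / 2 * dx v b x ^ 2 + γ * (dx p b x ^ 2 + dx q b x ^ 2))) =
    ∫ x, (α * γ * v a x * SK.rho p q a x - α / 6 * v a x ^ 3 + β * γ / 2 * SK.rho p q a x ^ 2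
      + α / 2 * dx v a x ^ 2 + γ * (dx p a x ^ 2 + dx q a x ^ 2)) := by
  have key : ∀ t, (∫ x, (α * γ * v t x * SK.rho p q t x - α / 6 * v t x ^ 3
      + β * γ / 2 * SK.rho p q t x ^ 2
      + α / 2 * dx v t x ^ 2 + γ * (dx p t x ^ 2 + dx q t x ^ 2))) =
      α * (∫ x, (2⁻¹ * dx v t x ^ 2 - 6⁻¹ * v t x ^ 3 + γ * (v t x * SK.rho p q t x)))
      + γ * (∫ x, (dx p t x ^ 2 + dx q t x ^ 2)) + β * γ / 2 * ∫ x, SK.rho p q t x ^ 2 := by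
    intro t
    have V := S.sv.D t
    have Vx := S.sv.dx.D t
    have R := S.rho.D t
    have i1 : D (fun x => 2⁻¹ * dx v t x ^ 2 - 6⁻¹ * v t x ^ 3 + γ * (v t x * SK.rho p q t x)) := by
      have : D (fun x => 2⁻¹ * dx v t x ^ 2 - 6⁻¹ * (v t x ^ 2 * v t x) + γ * (v t x * SK.rho p q t x)) :=
        ((Vx.sq.cmul _).sub ((V.sq.mul V).cmul _)).add ((V.mul R).cmul γ)
      convert this using 2; ring
    have i2 : D (fun x => dx p t x ^ 2 + dx q t x ^ 2) := (S.sp.dx.D t).sq.add (S.sq.dx.D t).sq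
    rw [← integral_const_mul, ← integral_const_mul, ← integral_const_mul,
      ← integral_add (i1.cmul α).int (i2.cmul γ).int,
      ← integral_add ((i1.cmul α).add (i2.cmul γ)).int (R.sq.cmul _).int]
    congr 1
    funext x
    ring
  obtain ⟨a1, b1⟩ := S.E1 hab
  obtain ⟨a2, b2⟩ := S.E2 hab
  obtain ⟨a3, b3⟩ := S.E3 hab
  rw [key, key, ← sub_eq_zero]
  have h0 : (∫ t in a..b, (0 : ℝ)) = 0 := by simp
  rw [← h0]
  rw [← intervalIntegral.integral_congr (fun t _ => S.lim0 t)]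
  rw [intervalIntegral.integral_add ((a1.const_mul _).add (a2.const_mul _)) (a3.const_mul _),
    intervalIntegral.integral_add (a1.const_mul _) (a2.const_mul _),
    intervalIntegral.integral_const_mul, intervalIntegral.integral_const_mul,
    intervalIntegral.integral_const_mul, ← b1, ← b2, ← b3]
  ring
end
end SK
end

open MeasureTheory Filter Topology
open scoped ContDiff

namespace SK

lemma dx_iter (g : ℝ → ℝ → ℝ) (t : ℝ) (j : ℕ) : (dx^[j] g) t = deriv^[j] (g t) := by
  induction j with
  | zero => rfl
  | succ j ih =>
    rw [Function.iterate_succ_apply', Function.iterate_succ_apply', ← ih]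
    rfl

lemma Sc.mk {g : ℝ → ℝ → ℝ} (h : Sm g) (hs : ∀ t, ∃ f : SchwartzMap ℝ ℝ, ∀ x, f x = g t x) :
    Sc g := by
  refine ⟨h, fun t m => UB.base (v := g) (fun j => ?_) m 0⟩
  obtain ⟨f, hf⟩ := hs t
  have e : g t = f := by funext x; exact (hf x).symm
  obtain ⟨A, -, hA⟩ := f.decay 0 j
  obtain ⟨B, -, hB⟩ := f.decay 2 j
  refine ⟨A + B, fun x => ?_⟩
  rw [dx_iter, ← iteratedDeriv_eq_iterate, e, wt, ← div_eq_mul_inv, le_div_iff₀ (by positivity)]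
  have a := hA x
  have b := hB x
  rw [norm_iteratedFDeriv_eq_norm_iteratedDeriv] at a b
  rw [pow_zero, one_mul, Real.norm_eq_abs] at a
  rw [Real.norm_eq_abs, Real.norm_eq_abs, sq_abs] at b
  linarith

lemma hu1 {p q : ℝ → ℝ → ℝ} (sp : Sm p) (sq : Sm q) (t x : ℝ) :
    HasDerivAt (fun y => (p t y : ℂ) + q t y * Complex.I)
      ((dx p t x : ℂ) + dx q t x * Complex.I) x :=
  (sp.hx t x).ofReal_comp.add ((sq.hx t x).ofReal_comp.mul_const _)
lemma hu2 {p q : ℝ → ℝ → ℝ} (sp : Sm p) (sq : Sm q) (t x : ℝ) :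
    HasDerivAt (fun s => (p s x : ℂ) + q s x * Complex.I)
      ((dt p t x : ℂ) + dt q t x * Complex.I) t :=
  (sp.ht t x).ofReal_comp.add ((sq.ht t x).ofReal_comp.mul_const _)

lemma nsq (a b : ℝ) : ‖(a : ℂ) + b * Complex.I‖ ^ 2 = a * a + b * b := by
  rw [Complex.sq_norm, Complex.normSq_add_mul_I]; ring

theorem red {α β γ : ℝ} {u : ℝ → ℝ → ℂ} {v : ℝ → ℝ → ℝ} (h : IsSKdVSolution α β γ u v) :
    ∃ p q : ℝ → ℝ → ℝ, Sol α β γ v p q ∧ (∀ t x, ‖u t x‖ ^ 2 = rho p q t x) ∧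
      ∀ t x, ‖deriv (u t) x‖ ^ 2 = dx p t x ^ 2 + dx q t x ^ 2 := by
  obtain ⟨cu, cv, su, sv, eu, ev, C, hC⟩ := h
  obtain ⟨p, hp⟩ : ∃ p : ℝ → ℝ → ℝ, p = fun t x => (u t x).re := ⟨_, rfl⟩
  obtain ⟨q, hq⟩ : ∃ q : ℝ → ℝ → ℝ, q = fun t x => (u t x).im := ⟨_, rfl⟩
  have hu : u = fun t x => (p t x : ℂ) + q t x * Complex.I := by
    funext t x; rw [hp, hq]; exact (Complex.re_add_im _).symm
  have mp : Sm p := by rw [hp]; exact Complex.reCLM.contDiff.comp cu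
  have mq : Sm q := by rw [hq]; exact Complex.imCLM.contDiff.comp cu
  have V : Sc v := Sc.mk cv sv
  have P : Sc p := Sc.mk mp fun t => by
    obtain ⟨f, hf⟩ := su t
    exact ⟨SchwartzMap.postcompCLM Complex.reCLM f, fun x => by simp [hf, hp]⟩
  have Q : Sc q := Sc.mk mq fun t => by
    obtain ⟨f, hf⟩ := su t
    exact ⟨SchwartzMap.postcompCLM Complex.imCLM f, fun x => by simp [hf, hq]⟩
  clear hp hq su sv cu
  subst hu
  have d1 : ∀ t, deriv (fun x => (p t x : ℂ) + q t x * Complex.I) =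
      fun x => (dx p t x : ℂ) + dx q t x * Complex.I := fun t => by
    funext x; exact (hu1 mp mq t x).deriv
  have d2 : ∀ t x, iteratedDeriv 2 (fun x => (p t x : ℂ) + q t x * Complex.I) x =
      (dx (dx p) t x : ℂ) + dx (dx q) t x * Complex.I := fun t x => by
    rw [iteratedDeriv_succ, iteratedDeriv_one, d1]
    exact (hu1 mp.dx mq.dx t x).deriv
  have dtt : ∀ t x, deriv (fun s => (p s x : ℂ) + q s x * Complex.I) t =
      (dt p t x : ℂ) + dt q t x * Complex.I := fun t x => (hu2 mp mq t x).deriv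
  have n1 : ∀ t x, ‖deriv (fun x => (p t x : ℂ) + q t x * Complex.I) x‖ ^ 2
      = dx p t x ^ 2 + dx q t x ^ 2 := fun t x => by
    rw [d1, nsq]; ring
  have E : ∀ t x, dt p t x = - dx (dx q) t x
    + (α * v t x + β * (p t x * p t x + q t x * q t x)) * q t x ∧ dt q t x = dx (dx p) t x
    - (α * v t x + β * (p t x * p t x + q t x * q t x)) * p t x := by
    intro t x
    have := eu t x
    rw [dtt, d2, ← Complex.ofReal_pow, nsq] at this
    have re := congrArg Complex.re this
    have im := congrArg Complex.im this
    simp at re im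
    constructor <;> linarith
  refine ⟨p, q, ⟨V, P, Q, fun t x => (E t x).1, fun t x => (E t x).2, ?_, C, ?_⟩,
    fun t x => nsq _ _, n1⟩
  · intro t x
    have := ev t x
    simp only [nsq] at this
    have hr : HasDerivAt (fun y => p t y * p t y + q t y * q t y) _ x :=
      ((mp.hx t x).mul (mp.hx t x)).add ((mq.hx t x).mul (mq.hx t x))
    rw [hr.deriv, iteratedDeriv_succ, iteratedDeriv_succ, iteratedDeriv_one] at this
    change dt v t x + dx (dx (dx v)) t x + v t x * dx v t x = _ at this
    linarith
  · intro t
    have := hC t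
    simp only [n1, nsq] at this
    rw [integral_add (P.dx.D t).sq.int (Q.dx.D t).sq.int] at this
    have e : (∫ x, (p t x * p t x + q t x * q t x)) = (∫ x, p t x ^ 2) + ∫ x, q t x ^ 2 := by
      rw [← integral_add (P.D t).sq.int (Q.D t).sq.int]
      congr 1; funext x; ring
    rw [e] at this
    change _ + _ + _ + (∫ x, dx v t x ^ 2) ≤ C at this
    linarith
end SK
end

/-- Conservation of the energy
    `I₂(t) = ∫ (αγ v |u|² - (α/6) v³ + (βγ/2) |u|⁴ + (α/2)(∂ₓv)² + γ |∂ₓu|²)`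
    for regular solutions of the Schrödinger–KdV system. -/
theorem skdv_conservation_I2 (α β γ : ℝ)
    (u : ℝ → ℝ → ℂ) (v : ℝ → ℝ → ℝ) (hsol : IsSKdVSolution α β γ u v) :
    ∀ t : ℝ,
      (∫ x : ℝ, (α * γ * v t x * ‖u t x‖ ^ 2 - α / 6 * (v t x) ^ 3 +
          β * γ / 2 * ‖u t x‖ ^ 4 + α / 2 * (deriv (v t) x) ^ 2 +
          γ * ‖deriv (u t) x‖ ^ 2))
        = ∫ x : ℝ, (α * γ * v 0 x * ‖u 0 x‖ ^ 2 - α / 6 * (v 0 x) ^ 3 +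
            β * γ / 2 * ‖u 0 x‖ ^ 4 + α / 2 * (deriv (v 0) x) ^ 2 +
            γ * ‖deriv (u 0) x‖ ^ 2) := by
  obtain ⟨p, q, S, h1, h2⟩ := SK.red hsol
  have h4 : ∀ t x, ‖u t x‖ ^ 4 = SK.rho p q t x ^ 2 := fun t x => by
    rw [← h1]; ring
  intro t
  simp only [h1, h2, h4]
  rcases le_total 0 t with ht | ht
  · exact S.cons ht
  · exact (S.cons ht).symm
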